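/- arXiv:0805.0582 — 2 statements merged into one kernel-verified Lean document; each statement's English description precedes it below -/
import Mathlib

section
/- (Perturbation Lemma, homotopy equivalence form.) Let (Y, ∂) and (X, d) be chain complexes of k-modules, let i : (Y, ∂) → (X, d) and p : (X, d) → (Y, ∂) be chain maps that are quasi-isomorphisms, and let h : X_* → X_{*+1} be a homotopy from i∘p to the identity, i.e. d∘h + h∘d = i∘p − id. Let δ : X_* → X_{*-1} be a small perturbation: (d + δ)∘(d + δ) = 0 and id − δ∘h is invertible in each degree. Set A = (id − δ∘h)^{-1}∘δ, ∂¹ = ∂ + p∘A∘i, i¹ = i + h∘A∘i, p¹ = p + p∘A∘h, and h¹ = h + h∘A∘h. Then (Y, ∂¹) is a chain complex (∂¹∘∂¹ = 0), the maps i¹ : (Y, ∂¹) → (X, d + δ) and p¹ : (X, d + δ) → (Y, ∂¹) are chain maps which are quasi-isomorphisms, and h¹ is a homotopy from i¹∘p¹ to the identity: (d + δ)∘h¹ + h¹∘(d + δ) = i¹∘p¹ − id. -/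
/-!
The maps `Φ = id - h∘δ` and `Ψ = id - δ∘h` are invertible, and `A = δ∘Φ⁻¹ = Ψ⁻¹∘δ`, so that
`i¹ = Φ⁻¹∘i`, `p¹ = p∘Ψ⁻¹` and `h¹ = Φ⁻¹∘h = h∘Ψ⁻¹`. Every identity between the perturbed maps
becomes an expansion after composing with `Φ` on the left and `Ψ` on the right; for instance
`Φ∘(d + δ) = (d + i∘p∘A)∘Φ`.

Conjugation by `Φ` thus turns `i¹ : (Y, ∂¹) → (X, d + δ)` into the original map
`i : (Y, ∂ + q∘i) → (X, d + i∘q)` with `q = p∘A`, where `∂∘q + q∘d + q∘i∘q = 0`. The shear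
`(y, x) ↦ (y - q x, x)` identifies the mapping cone of the latter with that of
`i : (Y, ∂) → (X, d)`, so `i¹` remains a quasi-isomorphism. The homotopy `i¹∘p¹ ≃ id` then gives
the same for `p¹`.
-/

section PerturbationOperator

variable {k M N : Type*} [Semiring k] [AddCommGroup M] [AddCommGroup N] [Module k M] [Module k N]

/-- The operator `A = (id - δ∘h)⁻¹∘δ` of the perturbation lemma. Since `Ring.inverse` is zero on
non-units, it is meaningful only when `id - δ∘h` is invertible. -/
noncomputable def perturbationOperator (δ : N →ₗ[k] M) (h : M →ₗ[k] N) : N →ₗ[k] M :=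
  Ring.inverse ((1 : Module.End k M) - δ ∘ₗ h) ∘ₗ δ

variable {δ : N →ₗ[k] M} {h : M →ₗ[k] N}

theorem perturbationOperator_sub_apply (hu : IsUnit ((1 : Module.End k M) - δ ∘ₗ h)) (x : N) :
    perturbationOperator δ h x - δ (h (perturbationOperator δ h x)) = δ x :=
  LinearMap.congr_fun (Ring.mul_inverse_cancel _ hu) (δ x)

theorem perturbationOperator_apply_sub (hu : IsUnit ((1 : Module.End k M) - δ ∘ₗ h)) (x : N) :
    perturbationOperator δ h (x - h (δ x)) = δ x := by
  have hinv := LinearMap.congr_fun (Ring.inverse_mul_cancel _ hu) (δ x)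
  rwa [Module.End.mul_apply, LinearMap.sub_apply, Module.End.one_apply, LinearMap.comp_apply,
    ← map_sub] at hinv

/-- The automorphism `Φ = id - h∘δ`, with inverse `id + h∘A`. -/
noncomputable def idSubHomotopyPerturbation (hu : IsUnit ((1 : Module.End k M) - δ ∘ₗ h)) :
    N ≃ₗ[k] N where
  __ := LinearMap.id - h ∘ₗ δ
  invFun x := x + h (perturbationOperator δ h x)
  left_inv x := by
    change x - h (δ x) + h (perturbationOperator δ h (x - h (δ x))) = x
    rw [perturbationOperator_apply_sub hu, sub_add_cancel]
  right_inv x := by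
    change x + h (perturbationOperator δ h x) - h (δ (x + h (perturbationOperator δ h x))) = x
    rw [map_add, ← perturbationOperator_sub_apply hu, sub_add_cancel, add_sub_cancel_right]

/-- The automorphism `Ψ = id - δ∘h`, with inverse `id + A∘h`. -/
noncomputable def idSubPerturbationHomotopy (hu : IsUnit ((1 : Module.End k M) - δ ∘ₗ h)) :
    M ≃ₗ[k] M where
  __ := LinearMap.id - δ ∘ₗ h
  invFun x := x + perturbationOperator δ h (h x)
  left_inv x := by
    change x - δ (h x) + perturbationOperator δ h (h (x - δ (h x))) = x
    rw [map_sub h, perturbationOperator_apply_sub hu, sub_add_cancel]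
  right_inv x := by
    change x + perturbationOperator δ h (h x) - δ (h (x + perturbationOperator δ h (h x))) = x
    rw [map_add h, map_add δ, ← perturbationOperator_sub_apply hu (h x), sub_add_cancel,
      add_sub_cancel_right]

variable (hu : IsUnit ((1 : Module.End k M) - δ ∘ₗ h))

theorem idSubHomotopyPerturbation_apply (x : N) :
    idSubHomotopyPerturbation hu x = x - h (δ x) := rfl

theorem idSubPerturbationHomotopy_apply (x : M) :
    idSubPerturbationHomotopy hu x = x - δ (h x) := rfl

end PerturbationOperator

section Homology

variable {k : Type*} [Semiring k] {X Y : ℤ → Type*}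
  [∀ m, AddCommGroup (X m)] [∀ m, Module k (X m)]
  [∀ m, AddCommGroup (Y m)] [∀ m, Module k (Y m)]

/-- The maps `f m`, in degree `m + 1`, from `(X, dX)` to `(Y, dY)` are surjective on homology. -/
def SurjectiveOnHomology (dX : ∀ m : ℤ, X (m + 1) →ₗ[k] X m) (dY : ∀ m : ℤ, Y (m + 1) →ₗ[k] Y m)
    (f : ∀ m : ℤ, X (m + 1) →ₗ[k] Y (m + 1)) : Prop :=
  ∀ (m : ℤ) (y : Y (m + 1)), dY m y = 0 →
    ∃ x : X (m + 1), dX m x = 0 ∧ ∃ w : Y (m + 1 + 1), y - f m x = dY (m + 1) w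

/-- The maps `f m`, in degree `m + 1`, from `(X, dX)` to `(Y, dY)` are injective on homology. -/
def InjectiveOnHomology (dX : ∀ m : ℤ, X (m + 1) →ₗ[k] X m) (dY : ∀ m : ℤ, Y (m + 1) →ₗ[k] Y m)
    (f : ∀ m : ℤ, X (m + 1) →ₗ[k] Y (m + 1)) : Prop :=
  ∀ (m : ℤ) (x : X (m + 1)), dX m x = 0 →
    (∃ w : Y (m + 1 + 1), f m x = dY (m + 1) w) → ∃ z : X (m + 1 + 1), x = dX (m + 1) z

variable (k X Y) in
/-- Chain complexes `(X, dX)` and `(Y, dY)` with chain maps `i : Y → X`, `p : X → Y` and a homotopy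
`h` from `i∘p` to the identity, so that `Y` dominates `X` up to homotopy. A homotopy equivalence
data is such a domination whose `i` and `p` are quasi-isomorphisms. The component of `i` in degree
`m + 1` is written `i m`, because the perturbed map `i + h∘A∘i` typechecks only in degrees of the
form `m + 1`. -/
structure HomotopyDomination where
  dX : ∀ m : ℤ, X (m + 1) →ₗ[k] X m
  dY : ∀ m : ℤ, Y (m + 1) →ₗ[k] Y m
  i : ∀ m : ℤ, Y (m + 1) →ₗ[k] X (m + 1)
  p : ∀ m : ℤ, X m →ₗ[k] Y m
  h : ∀ m : ℤ, X m →ₗ[k] X (m + 1)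
  dX_comp_dX : ∀ m, dX m ∘ₗ dX (m + 1) = 0
  dY_comp_dY : ∀ m, dY m ∘ₗ dY (m + 1) = 0
  dX_comp_i : ∀ m, dX (m + 1) ∘ₗ i (m + 1) = i m ∘ₗ dY (m + 1)
  p_comp_dX : ∀ m, p m ∘ₗ dX m = dY m ∘ₗ p (m + 1)
  homotopy : ∀ m, dX (m + 1) ∘ₗ h (m + 1) + h m ∘ₗ dX m = i m ∘ₗ p (m + 1) - LinearMap.id

namespace HomotopyDomination

variable (D : HomotopyDomination k X Y)

theorem dX_dX_apply (m : ℤ) (x : X (m + 1 + 1)) : D.dX m (D.dX (m + 1) x) = 0 :=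
  LinearMap.congr_fun (D.dX_comp_dX m) x

theorem dY_dY_apply (m : ℤ) (y : Y (m + 1 + 1)) : D.dY m (D.dY (m + 1) y) = 0 :=
  LinearMap.congr_fun (D.dY_comp_dY m) y

theorem dX_i_apply (m : ℤ) (y : Y (m + 1 + 1)) :
    D.dX (m + 1) (D.i (m + 1) y) = D.i m (D.dY (m + 1) y) :=
  LinearMap.congr_fun (D.dX_comp_i m) y

theorem p_dX_apply (m : ℤ) (x : X (m + 1)) : D.p m (D.dX m x) = D.dY m (D.p (m + 1) x) :=
  LinearMap.congr_fun (D.p_comp_dX m) x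

theorem homotopy_apply (m : ℤ) (x : X (m + 1)) :
    D.dX (m + 1) (D.h (m + 1) x) + D.h m (D.dX m x) = D.i m (D.p (m + 1) x) - x :=
  LinearMap.congr_fun (D.homotopy m) x

theorem dX_i_eq_zero {m : ℤ} {y : Y (m + 1)} (hy : D.dY m y = 0) : D.dX m (D.i m y) = 0 := by
  obtain ⟨n, rfl⟩ : ∃ n, m = n + 1 := ⟨m - 1, (sub_add_cancel m 1).symm⟩
  rw [D.dX_i_apply, hy, map_zero]

theorem dY_p_eq_zero {m : ℤ} {x : X (m + 1)} (hx : D.dX m x = 0) : D.dY m (D.p (m + 1) x) = 0 := by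
  rw [← D.p_dX_apply, hx, map_zero]

theorem sub_i_p_eq_boundary {m : ℤ} {x : X (m + 1)} (hx : D.dX m x = 0) :
    x - D.i m (D.p (m + 1) x) = D.dX (m + 1) (-D.h (m + 1) x) := by
  rw [map_neg, ← neg_sub, ← D.homotopy_apply, hx, map_zero, add_zero]

theorem surjectiveOnHomology_i : SurjectiveOnHomology D.dY D.dX D.i := fun m x hx =>
  ⟨D.p (m + 1) x, D.dY_p_eq_zero hx, -D.h (m + 1) x, D.sub_i_p_eq_boundary hx⟩

theorem injectiveOnHomology_p : InjectiveOnHomology D.dX D.dY (fun m => D.p (m + 1)) := by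
  rintro m x hx ⟨w, hw⟩
  refine ⟨D.i (m + 1) w - D.h (m + 1) x, ?_⟩
  rw [map_sub, D.dX_i_apply, ← hw, sub_eq_add_neg, ← map_neg, ← D.sub_i_p_eq_boundary hx,
    add_sub_cancel]

theorem surjectiveOnHomology_p (hi : InjectiveOnHomology D.dY D.dX D.i) :
    SurjectiveOnHomology D.dX D.dY (fun m => D.p (m + 1)) := by
  intro m y hy
  have hiy : D.dX m (D.i m y) = 0 := D.dX_i_eq_zero hy
  refine ⟨D.i m y, hiy, hi m _ ?_ ⟨-D.h (m + 1) (D.i m y), ?_⟩⟩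
  · rw [map_sub, hy, D.dY_p_eq_zero hiy, sub_zero]
  · rw [map_sub, D.sub_i_p_eq_boundary hiy]

/-- Injectivity on homology of `i : (Y, dY + q∘i) → (X, dX + i∘q)`, for a twisting `q` with
`dY∘q + q∘dX + q∘i∘q = 0`. -/
theorem exists_eq_twisted_boundary (hi : InjectiveOnHomology D.dY D.dX D.i)
    {q : ∀ m : ℤ, X (m + 1) →ₗ[k] Y m}
    (hq : ∀ m x, D.dY m (q (m + 1) x) + q m (D.dX (m + 1) x) + q m (D.i m (q (m + 1) x)) = 0)
    {m : ℤ} {y : Y (m + 1)} {x : X (m + 1 + 1)} (hy : D.dY m y + q m (D.i m y) = 0)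
    (hyx : D.i m y = D.dX (m + 1) x + D.i m (q (m + 1) x)) :
    ∃ w : Y (m + 1 + 1), y = D.dY (m + 1) w + q (m + 1) (D.i (m + 1) w) := by
  have hi_untwisted : D.i m (y - q (m + 1) x) = D.dX (m + 1) x := by
    rw [map_sub, hyx, add_sub_cancel_right]
  have hcycle : D.dY m (y - q (m + 1) x) = 0 := by
    rw [hyx, map_add] at hy
    rw [map_sub, sub_eq_zero]
    exact add_right_cancel (hy.trans (by rw [← add_assoc, hq m x]))
  obtain ⟨w, hw⟩ := hi m _ hcycle ⟨x, hi_untwisted⟩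
  have hcycle' : D.dX (m + 1) (x - D.i (m + 1) w) = 0 := by
    rw [map_sub, D.dX_i_apply, ← hw, hi_untwisted, sub_self]
  obtain ⟨v, hv, t, ht⟩ := D.surjectiveOnHomology_i (m + 1) _ hcycle'
  have hx : x = D.i (m + 1) w + D.i (m + 1) v + D.dX (m + 1 + 1) t := by
    rw [← ht]
    abel
  refine ⟨w + v - q (m + 1 + 1) t, ?_⟩
  calc
    y = D.dY (m + 1) w + q (m + 1) x := sub_eq_iff_eq_add.mp hw
    _ = D.dY (m + 1) w + (q (m + 1) (D.i (m + 1) w) + q (m + 1) (D.i (m + 1) v)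
          + q (m + 1) (D.dX (m + 1 + 1) t)) := by rw [hx, map_add, map_add]
    _ = D.dY (m + 1) (w + v - q (m + 1 + 1) t)
          + q (m + 1) (D.i (m + 1) (w + v - q (m + 1 + 1) t)) := by
      rw [eq_neg_of_add_eq_zero_right ((add_right_comm _ _ _).trans (hq (m + 1) t))]
      simp only [map_add, map_sub, hv]
      abel

variable (δ : ∀ m : ℤ, X (m + 1) →ₗ[k] X m)

/-- The operator `A = (id - δ∘h)⁻¹∘δ` in each degree. -/
noncomputable abbrev A (m : ℤ) : X (m + 1) →ₗ[k] X m := perturbationOperator (δ m) (D.h m)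

/-- The perturbed differential `∂¹ = ∂ + p∘A∘i`. -/
noncomputable def perturbedDY (m : ℤ) : Y (m + 1) →ₗ[k] Y m :=
  D.dY m + D.p m ∘ₗ D.A δ m ∘ₗ D.i m

/-- The perturbed map `i¹ = i + h∘A∘i`, indexed like `HomotopyDomination.i`. -/
noncomputable def perturbedI (m : ℤ) : Y (m + 1) →ₗ[k] X (m + 1) :=
  D.i m + D.h m ∘ₗ D.A δ m ∘ₗ D.i m

/-- The perturbed map `p¹ = p + p∘A∘h`. -/
noncomputable def perturbedP (m : ℤ) : X m →ₗ[k] Y m :=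
  D.p m + D.p m ∘ₗ D.A δ m ∘ₗ D.h m

/-- The perturbed homotopy `h¹ = h + h∘A∘h`. -/
noncomputable def perturbedH (m : ℤ) : X m →ₗ[k] X (m + 1) :=
  D.h m + D.h m ∘ₗ D.A δ m ∘ₗ D.h m

theorem perturbedDY_apply (m : ℤ) (y : Y (m + 1)) :
    D.perturbedDY δ m y = D.dY m y + D.p m (D.A δ m (D.i m y)) := rfl

/-- A perturbation `δ` of `dX`, that is `(dX + δ)² = 0`, which is small: `id - δ∘h` is invertible
in each degree. -/
structure IsSmallPerturbation : Prop where
  comp_eq_zero : ∀ m, (D.dX m + δ m) ∘ₗ (D.dX (m + 1) + δ (m + 1)) = 0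
  isUnit : ∀ m, IsUnit ((1 : Module.End k (X m)) - δ m ∘ₗ D.h m)

namespace IsSmallPerturbation

variable {D δ} (hδ : D.IsSmallPerturbation δ)

/-- The automorphism `Φ = id - h∘δ` in degree `m + 1`. -/
noncomputable abbrev Φ (m : ℤ) : X (m + 1) ≃ₗ[k] X (m + 1) :=
  idSubHomotopyPerturbation (hδ.isUnit m)

/-- The automorphism `Ψ = id - δ∘h` in degree `m`. -/
noncomputable abbrev Ψ (m : ℤ) : X m ≃ₗ[k] X m :=
  idSubPerturbationHomotopy (hδ.isUnit m)

theorem A_Φ_apply (m : ℤ) (x : X (m + 1)) : D.A δ m (hδ.Φ m x) = δ m x :=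
  perturbationOperator_apply_sub (hδ.isUnit m) x

theorem Ψ_A_apply (m : ℤ) (x : X (m + 1)) : hδ.Ψ m (D.A δ m x) = δ m x :=
  perturbationOperator_sub_apply (hδ.isUnit m) x

theorem Φ_perturbedI_apply (m : ℤ) (y : Y (m + 1)) : hδ.Φ m (D.perturbedI δ m y) = D.i m y :=
  (hδ.Φ m).apply_symm_apply (D.i m y)

theorem Φ_perturbedH_apply (m : ℤ) (x : X m) : hδ.Φ m (D.perturbedH δ m x) = D.h m x :=
  (hδ.Φ m).apply_symm_apply (D.h m x)

theorem perturbedP_Ψ_apply (m : ℤ) (x : X m) : D.perturbedP δ m (hδ.Ψ m x) = D.p m x :=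
  (map_add (D.p m) _ _).symm.trans (congrArg (D.p m) ((hδ.Ψ m).symm_apply_apply x))

theorem perturbedH_Ψ_apply (m : ℤ) (x : X m) : D.perturbedH δ m (hδ.Ψ m x) = D.h m x :=
  (map_add (D.h m) _ _).symm.trans (congrArg (D.h m) ((hδ.Ψ m).symm_apply_apply x))

theorem dX_δ_apply (hδ : D.IsSmallPerturbation δ) (m : ℤ) (x : X (m + 1 + 1)) :
    D.dX m (δ (m + 1) x) = -δ m (D.dX (m + 1) x + δ (m + 1) x) := by
  have hsq := LinearMap.congr_fun (hδ.comp_eq_zero m) x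
  rw [LinearMap.comp_apply, LinearMap.add_apply, LinearMap.add_apply, map_add (D.dX m),
    D.dX_dX_apply, zero_add] at hsq
  exact eq_neg_of_add_eq_zero_left hsq

theorem Φ_perturbed_dX_apply (m : ℤ) (x : X (m + 1 + 1)) :
    hδ.Φ m (D.dX (m + 1) x + δ (m + 1) x) =
      D.dX (m + 1) (hδ.Φ (m + 1) x) + D.i m (D.p (m + 1) (D.A δ (m + 1) (hδ.Φ (m + 1) x))) := by
  have h_homotopy := D.homotopy_apply m (δ (m + 1) x)
  rw [hδ.dX_δ_apply, map_neg] at h_homotopy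
  rw [hδ.A_Φ_apply, idSubHomotopyPerturbation_apply, idSubHomotopyPerturbation_apply, map_sub]
  grind

theorem perturbed_dX_Ψ_apply (m : ℤ) (x : X (m + 1)) :
    D.dX m (hδ.Ψ (m + 1) x) + δ m (hδ.Ψ (m + 1) x) =
      hδ.Ψ m (D.dX m x + D.A δ m (D.i m (D.p (m + 1) x))) := by
  have h_homotopy := congrArg (δ m) (D.homotopy_apply m x)
  rw [map_add, hδ.Ψ_A_apply, idSubPerturbationHomotopy_apply, idSubPerturbationHomotopy_apply,
    map_sub (D.dX m), hδ.dX_δ_apply]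
  simp only [map_add, map_sub] at h_homotopy ⊢
  grind

theorem A_twisting_apply (hδ : D.IsSmallPerturbation δ) (m : ℤ) (x : X (m + 1 + 1)) :
    D.dX m (D.A δ (m + 1) x) + D.A δ m (D.dX (m + 1) x) +
      D.A δ m (D.i m (D.p (m + 1) (D.A δ (m + 1) x))) = 0 := by
  obtain ⟨z, rfl⟩ := (hδ.Φ (m + 1)).surjective x
  rw [add_assoc, ← map_add, ← hδ.Φ_perturbed_dX_apply, hδ.A_Φ_apply, hδ.A_Φ_apply,
    hδ.dX_δ_apply, neg_add_cancel]

theorem p_A_twisting_apply (hδ : D.IsSmallPerturbation δ) (m : ℤ) (x : X (m + 1 + 1)) :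
    D.dY m (D.p (m + 1) (D.A δ (m + 1) x)) + D.p m (D.A δ m (D.dX (m + 1) x)) +
      D.p m (D.A δ m (D.i m (D.p (m + 1) (D.A δ (m + 1) x)))) = 0 := by
  rw [← D.p_dX_apply, ← map_add, ← map_add, hδ.A_twisting_apply, map_zero]

theorem perturbedDY_comp_perturbedDY (hδ : D.IsSmallPerturbation δ) (m : ℤ) :
    D.perturbedDY δ m ∘ₗ D.perturbedDY δ (m + 1) = 0 := by
  ext y
  simp only [LinearMap.comp_apply, perturbedDY_apply, map_add, D.dY_dY_apply, zero_add,
    ← D.dX_i_apply]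
  rw [add_left_comm, ← add_assoc, hδ.p_A_twisting_apply, LinearMap.zero_apply]

theorem perturbedDX_comp_perturbedI (hδ : D.IsSmallPerturbation δ) (m : ℤ) :
    (D.dX (m + 1) + δ (m + 1)) ∘ₗ D.perturbedI δ (m + 1) =
      D.perturbedI δ m ∘ₗ D.perturbedDY δ (m + 1) := by
  ext y
  apply (hδ.Φ m).injective
  rw [LinearMap.comp_apply, LinearMap.comp_apply, LinearMap.add_apply, hδ.Φ_perturbed_dX_apply,
    hδ.Φ_perturbedI_apply, hδ.Φ_perturbedI_apply, D.dX_i_apply, perturbedDY_apply, map_add]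

theorem perturbedP_comp_perturbedDX (hδ : D.IsSmallPerturbation δ) (m : ℤ) :
    D.perturbedP δ m ∘ₗ (D.dX m + δ m) = D.perturbedDY δ m ∘ₗ D.perturbedP δ (m + 1) := by
  ext x
  obtain ⟨z, rfl⟩ := (hδ.Ψ (m + 1)).surjective x
  rw [LinearMap.comp_apply, LinearMap.comp_apply, LinearMap.add_apply, hδ.perturbed_dX_Ψ_apply,
    hδ.perturbedP_Ψ_apply, hδ.perturbedP_Ψ_apply, map_add, D.p_dX_apply, perturbedDY_apply]

theorem perturbed_homotopy (hδ : D.IsSmallPerturbation δ) (m : ℤ) :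
    (D.dX (m + 1) + δ (m + 1)) ∘ₗ D.perturbedH δ (m + 1) + D.perturbedH δ m ∘ₗ (D.dX m + δ m) =
      D.perturbedI δ m ∘ₗ D.perturbedP δ (m + 1) - LinearMap.id := by
  ext x
  obtain ⟨z, rfl⟩ := (hδ.Ψ (m + 1)).surjective x
  apply (hδ.Φ m).injective
  simp only [LinearMap.add_apply, LinearMap.sub_apply, LinearMap.comp_apply, LinearMap.id_apply]
  rw [map_add (hδ.Φ m), map_sub (hδ.Φ m), hδ.Φ_perturbedH_apply, hδ.perturbedH_Ψ_apply,
    hδ.perturbedP_Ψ_apply, hδ.Φ_perturbedI_apply, hδ.Φ_perturbed_dX_apply, hδ.A_Φ_apply,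
    idSubHomotopyPerturbation_apply, idSubHomotopyPerturbation_apply,
    idSubPerturbationHomotopy_apply]
  have h_homotopy := D.homotopy_apply m z
  have h_homotopy_δh := D.homotopy_apply m (δ (m + 1) (D.h (m + 1) z))
  simp only [map_add, map_sub]
  grind

/-- The domination of `(X, d + δ)` by `(Y, ∂¹)` produced by the perturbation lemma. -/
noncomputable def perturb : HomotopyDomination k X Y where
  dX m := D.dX m + δ m
  dY := D.perturbedDY δ
  i := D.perturbedI δ
  p := D.perturbedP δ
  h := D.perturbedH δ
  dX_comp_dX := hδ.comp_eq_zero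
  dY_comp_dY := hδ.perturbedDY_comp_perturbedDY
  dX_comp_i := hδ.perturbedDX_comp_perturbedI
  p_comp_dX := hδ.perturbedP_comp_perturbedDX
  homotopy := hδ.perturbed_homotopy

theorem injectiveOnHomology_perturb_i (hi : InjectiveOnHomology D.dY D.dX D.i) :
    InjectiveOnHomology hδ.perturb.dY hδ.perturb.dX hδ.perturb.i := by
  rintro m y hy ⟨z, hz⟩
  have hΦ : D.i m y = D.dX (m + 1) (hδ.Φ (m + 1) z) +
      D.i m (D.p (m + 1) (D.A δ (m + 1) (hδ.Φ (m + 1) z))) :=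
    calc
      D.i m y = hδ.Φ m (D.perturbedI δ m y) := (hδ.Φ_perturbedI_apply m y).symm
      _ = hδ.Φ m (D.dX (m + 1) z + δ (m + 1) z) := congrArg (hδ.Φ m) hz
      _ = _ := hδ.Φ_perturbed_dX_apply m z
  exact D.exists_eq_twisted_boundary hi (q := fun m => D.p m ∘ₗ D.A δ m)
    hδ.p_A_twisting_apply hy hΦ

end IsSmallPerturbation

end HomotopyDomination

theorem perturbation_lemma_homotopy_equivalence_general {D : HomotopyDomination k X Y}
    (hi : InjectiveOnHomology D.dY D.dX D.i) {δ : ∀ m : ℤ, X (m + 1) →ₗ[k] X m}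
    (hδ : D.IsSmallPerturbation δ) :
    (∀ m, D.perturbedDY δ m ∘ₗ D.perturbedDY δ (m + 1) = 0) ∧
    (∀ m, (D.dX (m + 1) + δ (m + 1)) ∘ₗ D.perturbedI δ (m + 1) =
      D.perturbedI δ m ∘ₗ D.perturbedDY δ (m + 1)) ∧
    (∀ m, D.perturbedP δ m ∘ₗ (D.dX m + δ m) = D.perturbedDY δ m ∘ₗ D.perturbedP δ (m + 1)) ∧
    (∀ m, (D.dX (m + 1) + δ (m + 1)) ∘ₗ D.perturbedH δ (m + 1) +
      D.perturbedH δ m ∘ₗ (D.dX m + δ m) =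
        D.perturbedI δ m ∘ₗ D.perturbedP δ (m + 1) - LinearMap.id) ∧
    SurjectiveOnHomology (D.perturbedDY δ) (fun m => D.dX m + δ m) (D.perturbedI δ) ∧
    InjectiveOnHomology (D.perturbedDY δ) (fun m => D.dX m + δ m) (D.perturbedI δ) ∧
    SurjectiveOnHomology (fun m => D.dX m + δ m) (D.perturbedDY δ)
      (fun m => D.perturbedP δ (m + 1)) ∧
    InjectiveOnHomology (fun m => D.dX m + δ m) (D.perturbedDY δ)
      (fun m => D.perturbedP δ (m + 1)) := by
  have hi_perturb := hδ.injectiveOnHomology_perturb_i hi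
  exact ⟨hδ.perturb.dY_comp_dY, hδ.perturb.dX_comp_i, hδ.perturb.p_comp_dX, hδ.perturb.homotopy,
    hδ.perturb.surjectiveOnHomology_i, hi_perturb, hδ.perturb.surjectiveOnHomology_p hi_perturb,
    hδ.perturb.injectiveOnHomology_p⟩

end Homology

/-- Perturbation Lemma, homotopy equivalence form.  Given chain complexes
`(Y, dY)` and `(X, dX)` of `k`-modules, quasi-isomorphic chain maps `i, p` between them, a
homotopy `h` from `i∘p` to the identity, and a small perturbation `δ` of `dX`, the perturbed
data `dY¹ = dY + p∘A∘i`, `i¹ = i + h∘A∘i`, `p¹ = p + p∘A∘h`, `h¹ = h + h∘A∘h` (with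
`A = (id - δ∘h)⁻¹∘δ`) again consists of: a chain complex `(Y, dY¹)`, chain maps `i¹, p¹`
which are quasi-isomorphisms, and a homotopy `h¹` from `i¹∘p¹` to the identity.

Degree conventions: differentials are given as `d n : X (n+1) →ₗ X n`, homotopies as
`h n : X n →ₗ X (n+1)`; quasi-isomorphism is expressed elementwise on homology. -/
theorem perturbation_lemma_homotopy_equivalence
    (k : Type*) [CommRing k]
    (X Y : ℤ → Type*)
    [∀ m, AddCommGroup (X m)] [∀ m, Module k (X m)]
    [∀ m, AddCommGroup (Y m)] [∀ m, Module k (Y m)]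
    (dX : ∀ m : ℤ, X (m + 1) →ₗ[k] X m) (dY : ∀ m : ℤ, Y (m + 1) →ₗ[k] Y m)
    (hdX : ∀ m, (dX m) ∘ₗ (dX (m + 1)) = 0) (hdY : ∀ m, (dY m) ∘ₗ (dY (m + 1)) = 0)
    (i : ∀ m : ℤ, Y m →ₗ[k] X m) (p : ∀ m : ℤ, X m →ₗ[k] Y m)
    (hichain : ∀ m, (dX m) ∘ₗ (i (m + 1)) = (i m) ∘ₗ (dY m))
    (hpchain : ∀ m, (p m) ∘ₗ (dX m) = (dY m) ∘ₗ (p (m + 1)))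
    -- `i` is a quasi-isomorphism (elementwise: surjective and injective on homology):
    (hiq1 : ∀ (m : ℤ) (x : X (m + 1)), dX m x = 0 →
      ∃ y : Y (m + 1), dY m y = 0 ∧ ∃ z : X (m + 1 + 1), x - i (m + 1) y = dX (m + 1) z)
    (hiq2 : ∀ (m : ℤ) (y : Y (m + 1)), dY m y = 0 →
      (∃ z : X (m + 1 + 1), i (m + 1) y = dX (m + 1) z) →
        ∃ w : Y (m + 1 + 1), y = dY (m + 1) w)
    -- `p` is a quasi-isomorphism:
    (hpq1 : ∀ (m : ℤ) (y : Y (m + 1)), dY m y = 0 →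
      ∃ x : X (m + 1), dX m x = 0 ∧ ∃ w : Y (m + 1 + 1), y - p (m + 1) x = dY (m + 1) w)
    (hpq2 : ∀ (m : ℤ) (x : X (m + 1)), dX m x = 0 →
      (∃ w : Y (m + 1 + 1), p (m + 1) x = dY (m + 1) w) →
        ∃ z : X (m + 1 + 1), x = dX (m + 1) z)
    -- the homotopy `h` from `i ∘ p` to the identity:
    (h : ∀ m : ℤ, X m →ₗ[k] X (m + 1))
    (hhtpy : ∀ m : ℤ, (dX (m + 1)) ∘ₗ (h (m + 1)) + (h m) ∘ₗ (dX m) =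
      (i (m + 1)) ∘ₗ (p (m + 1)) - LinearMap.id)
    -- the small perturbation `δ`:
    (δ : ∀ m : ℤ, X (m + 1) →ₗ[k] X m)
    (hδ : ∀ m, (dX m + δ m) ∘ₗ (dX (m + 1) + δ (m + 1)) = 0)
    (hsmall : ∀ m : ℤ, IsUnit ((1 : Module.End k (X m)) - (δ m) ∘ₗ (h m))) :
    -- the perturbed data:
    let a : ∀ m : ℤ, X (m + 1) →ₗ[k] X m := fun m =>
      (Ring.inverse ((1 : Module.End k (X m)) - (δ m) ∘ₗ (h m))) ∘ₗ (δ m)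
    let dY1 : ∀ m : ℤ, Y (m + 1) →ₗ[k] Y m := fun m =>
      dY m + (p m) ∘ₗ (a m) ∘ₗ (i (m + 1))
    let i1 : ∀ m : ℤ, Y (m + 1) →ₗ[k] X (m + 1) := fun m =>
      i (m + 1) + (h m) ∘ₗ (a m) ∘ₗ (i (m + 1))
    let p1 : ∀ m : ℤ, X m →ₗ[k] Y m := fun m =>
      p m + (p m) ∘ₗ (a m) ∘ₗ (h m)
    let h1 : ∀ m : ℤ, X m →ₗ[k] X (m + 1) := fun m =>
      h m + (h m) ∘ₗ (a m) ∘ₗ (h m)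
    -- `(Y, dY¹)` is a chain complex:
    (∀ m, (dY1 m) ∘ₗ (dY1 (m + 1)) = 0) ∧
    -- `i¹` and `p¹` are chain maps to and from `(X, dX + δ)`:
    (∀ m, (dX (m + 1) + δ (m + 1)) ∘ₗ (i1 (m + 1)) = (i1 m) ∘ₗ (dY1 (m + 1))) ∧
    (∀ m, (p1 m) ∘ₗ (dX m + δ m) = (dY1 m) ∘ₗ (p1 (m + 1))) ∧
    -- `h¹` is a homotopy from `i¹ ∘ p¹` to the identity:
    (∀ m : ℤ, (dX (m + 1) + δ (m + 1)) ∘ₗ (h1 (m + 1)) + (h1 m) ∘ₗ (dX m + δ m) =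
      (i1 m) ∘ₗ (p1 (m + 1)) - LinearMap.id) ∧
    -- `i¹` is a quasi-isomorphism:
    (∀ (m : ℤ) (x : X (m + 1)), (dX m + δ m) x = 0 →
      ∃ y : Y (m + 1), dY1 m y = 0 ∧
        ∃ z : X (m + 1 + 1), x - i1 m y = (dX (m + 1) + δ (m + 1)) z) ∧
    (∀ (m : ℤ) (y : Y (m + 1)), dY1 m y = 0 →
      (∃ z : X (m + 1 + 1), i1 m y = (dX (m + 1) + δ (m + 1)) z) →
        ∃ w : Y (m + 1 + 1), y = dY1 (m + 1) w) ∧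
    -- `p¹` is a quasi-isomorphism:
    (∀ (m : ℤ) (y : Y (m + 1)), dY1 m y = 0 →
      ∃ x : X (m + 1), (dX m + δ m) x = 0 ∧
        ∃ w : Y (m + 1 + 1), y - p1 (m + 1) x = dY1 (m + 1) w) ∧
    (∀ (m : ℤ) (x : X (m + 1)), (dX m + δ m) x = 0 →
      (∃ w : Y (m + 1 + 1), p1 (m + 1) x = dY1 (m + 1) w) →
        ∃ z : X (m + 1 + 1), x = (dX (m + 1) + δ (m + 1)) z) := by
  exact perturbation_lemma_homotopy_equivalence_general
    (D := ⟨dX, dY, fun m => i (m + 1), p, h, hdX, hdY, fun m => hichain (m + 1), hpchain, hhtpy⟩)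
    hiq2 ⟨hδ, hsmall⟩
end

section
/- Assume conditions (i)–(iii) hold and f is convolution invertible with inverse f^{-1}. Let Ā = A/k·1_A and consider the Hochschild complex (E ⊗_k Ā^{⊗*}, b) of A with coefficients in E = A #_f H, where A acts on E via a ↦ a#1 and b(x ⊗ ā_1 ⊗ ⋯ ⊗ ā_r) = x a_1 ⊗ ā_2 ⊗ ⋯ ⊗ ā_r + Σ_{i=1}^{r-1} (−1)^i x ⊗ ā_1 ⊗ ⋯ ⊗ (a_i a_{i+1})‾ ⊗ ⋯ ⊗ ā_r + (−1)^r a_r x ⊗ ā_1 ⊗ ⋯ ⊗ ā_{r-1}. For each h ∈ H the formula ϑ^h(x ⊗ ā_1 ⊗ ⋯ ⊗ ā_r) = γ(h^{(3)}) x γ^{-1}(h^{(1)}) ⊗ class of (a_1 ⊗ ⋯ ⊗ a_r)^{h^{(2)}}, where (a_1 ⊗ ⋯ ⊗ a_r)^h = a_1^{h^{(1)}} ⊗ ⋯ ⊗ a_r^{h^{(r)}}, defines a well-defined k-linear map ϑ^h_r : E ⊗_k Ā^{⊗r} → E ⊗_k Ā^{⊗r} that is a morphism of complexes: b∘ϑ^h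 = ϑ^h∘b in every degree. -/
open TensorProduct

noncomputable section CrossedProduct

variable (k A H : Type*) [CommRing k] [Ring A] [Algebra k A] [Ring H] [HopfAlgebra k H]

/-- A chosen "Sweedler representation" of the comultiplication of `H`:
`comul h = ∑_{i < n h} c₁ h i ⊗ c₂ h i` for every `h`. -/
def IsSweedlerRep (n : H → ℕ) (c₁ c₂ : H → ℕ → H) : Prop :=
  ∀ h : H, Coalgebra.comul (R := k) h = ∑ i ∈ Finset.range (n h), c₁ h i ⊗ₜ[k] c₂ h i

/-- `σ` is a weak action of `H` on `A`: `(ab)^h = a^{h⁽¹⁾} b^{h⁽²⁾}`, `1^h = ε(h)1`, `a^1 = a`. -/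
def IsWeakAction (n : H → ℕ) (c₁ c₂ : H → ℕ → H) (σ : H →ₗ[k] A →ₗ[k] A) : Prop :=
  (∀ (h : H) (a b : A),
      σ h (a * b) = ∑ i ∈ Finset.range (n h), σ (c₁ h i) a * σ (c₂ h i) b) ∧
  (∀ h : H, σ h (1 : A) = Coalgebra.counit (R := k) h • (1 : A)) ∧
  (∀ a : A, σ (1 : H) a = a)

/-- Condition (i): normality of the cocycle `f`. -/
def IsNormal (f : H →ₗ[k] H →ₗ[k] A) : Prop :=
  ∀ h : H, f h (1 : H) = Coalgebra.counit (R := k) h • (1 : A) ∧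
    f (1 : H) h = Coalgebra.counit (R := k) h • (1 : A)

/-- Condition (ii): the cocycle condition
`f(l⁽¹⁾,m⁽¹⁾)^{h⁽¹⁾} f(h⁽²⁾, l⁽²⁾m⁽²⁾) = f(h⁽¹⁾,l⁽¹⁾) f(h⁽²⁾l⁽²⁾, m)`. -/
def IsCocycle (n : H → ℕ) (c₁ c₂ : H → ℕ → H) (σ : H →ₗ[k] A →ₗ[k] A)
    (f : H →ₗ[k] H →ₗ[k] A) : Prop :=
  ∀ h l m : H,
    (∑ i ∈ Finset.range (n h), ∑ j ∈ Finset.range (n l), ∑ p ∈ Finset.range (n m),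
      σ (c₁ h i) (f (c₁ l j) (c₁ m p)) * f (c₂ h i) (c₂ l j * c₂ m p)) =
    ∑ i ∈ Finset.range (n h), ∑ j ∈ Finset.range (n l),
      f (c₁ h i) (c₁ l j) * f (c₂ h i * c₂ l j) m

/-- Condition (iii): the twisted module condition
`(a^{l⁽¹⁾})^{h⁽¹⁾} f(h⁽²⁾,l⁽²⁾) = f(h⁽¹⁾,l⁽¹⁾) a^{h⁽²⁾l⁽²⁾}`. -/
def IsTwistedModule (n : H → ℕ) (c₁ c₂ : H → ℕ → H) (σ : H →ₗ[k] A →ₗ[k] A)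
    (f : H →ₗ[k] H →ₗ[k] A) : Prop :=
  ∀ (h l : H) (a : A),
    (∑ i ∈ Finset.range (n h), ∑ j ∈ Finset.range (n l),
      σ (c₁ h i) (σ (c₁ l j) a) * f (c₂ h i) (c₂ l j)) =
    ∑ i ∈ Finset.range (n h), ∑ j ∈ Finset.range (n l),
      f (c₁ h i) (c₁ l j) * σ (c₂ h i * c₂ l j) a

/-- `finv` is the convolution inverse of `f`:
`f(h⁽¹⁾,l⁽¹⁾) f⁻¹(h⁽²⁾,l⁽²⁾) = f⁻¹(h⁽¹⁾,l⁽¹⁾) f(h⁽²⁾,l⁽²⁾) = ε(h)ε(l)1_A`. -/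
def IsConvInverse (n : H → ℕ) (c₁ c₂ : H → ℕ → H) (f finv : H →ₗ[k] H →ₗ[k] A) : Prop :=
  ∀ h l : H,
    (∑ i ∈ Finset.range (n h), ∑ j ∈ Finset.range (n l),
        f (c₁ h i) (c₁ l j) * finv (c₂ h i) (c₂ l j) =
      (Coalgebra.counit (R := k) h * Coalgebra.counit (R := k) l) • (1 : A)) ∧
    (∑ i ∈ Finset.range (n h), ∑ j ∈ Finset.range (n l),
        finv (c₁ h i) (c₁ l j) * f (c₂ h i) (c₂ l j) =
      (Coalgebra.counit (R := k) h * Coalgebra.counit (R := k) l) • (1 : A))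

/-- The multiplication of `A #_f H` as a bilinear map on `A ⊗[k] H`:
`(a # h)(b # l) = a b^{h⁽¹⁾} f(h⁽²⁾, l⁽¹⁾) # h⁽³⁾ l⁽²⁾`. -/
def crossedMul (σ : H →ₗ[k] A →ₗ[k] A) (f : H →ₗ[k] H →ₗ[k] A) :
    (A ⊗[k] H) →ₗ[k] (A ⊗[k] H) →ₗ[k] (A ⊗[k] H) :=
  TensorProduct.lift
    (((LinearMap.llcomp k (A ⊗[k] H) (A ⊗[k] H) (A ⊗[k] H)).comp
        (TensorProduct.curry
          ((LinearMap.rTensor H (LinearMap.mul' k A)) ∘ₗ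
            (TensorProduct.assoc k A A H).symm.toLinearMap))).compl₂
      (TensorProduct.curry
        ((LinearMap.rTensor H (LinearMap.mul' k A)) ∘ₗ
         (TensorProduct.map
            (TensorProduct.map (TensorProduct.lift σ) (TensorProduct.lift f))
            (LinearMap.mul' k H)) ∘ₗ
         (LinearMap.rTensor (H ⊗[k] H)
            (TensorProduct.tensorTensorTensorComm k H H A H).toLinearMap) ∘ₗ
         (TensorProduct.tensorTensorTensorComm k (H ⊗[k] H) H (A ⊗[k] H) H).toLinearMap ∘ₗ
         (TensorProduct.map
            ((LinearMap.rTensor H (Coalgebra.comul (R := k))) ∘ₗ (Coalgebra.comul (R := k)))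
            ((TensorProduct.assoc k A H H).symm.toLinearMap ∘ₗ
              (LinearMap.lTensor A (Coalgebra.comul (R := k))))))))

/-- The unit `1 # 1` of the crossed product. -/
def oneE : A ⊗[k] H := (1 : A) ⊗ₜ[k] (1 : H)

/-- The map `γ : H → A #_f H`, `γ(h) = 1 # h`. -/
def gam : H →ₗ[k] A ⊗[k] H := TensorProduct.mk k A H 1

/-- The map `h ↦ f⁻¹(S(h⁽²⁾), h⁽³⁾) # S(h⁽¹⁾)`, the convolution inverse of `γ`. -/
def gammaInv (finv : H →ₗ[k] H →ₗ[k] A) : H →ₗ[k] A ⊗[k] H :=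
  (TensorProduct.comm k H A).toLinearMap ∘ₗ
    (TensorProduct.map (HopfAlgebra.antipode (R := k))
      ((TensorProduct.lift finv) ∘ₗ (LinearMap.rTensor H (HopfAlgebra.antipode (R := k))))) ∘ₗ
    (LinearMap.lTensor H (Coalgebra.comul (R := k))) ∘ₗ (Coalgebra.comul (R := k))

/-- The canonical coaction `ν = id_A ⊗ Δ : A #_f H → (A #_f H) ⊗ H`. -/
def nuE : (A ⊗[k] H) →ₗ[k] (A ⊗[k] H) ⊗[k] H :=
  (TensorProduct.assoc k A H H).symm.toLinearMap ∘ₗ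
    (LinearMap.lTensor A (Coalgebra.comul (R := k)))

/-- Convolution product on `Hom_k(H, A #_f H)`: `(u * v)(h) = u(h⁽¹⁾) v(h⁽²⁾)`. -/
def convMul (σ : H →ₗ[k] A →ₗ[k] A) (f : H →ₗ[k] H →ₗ[k] A)
    (u v : H →ₗ[k] A ⊗[k] H) : H →ₗ[k] A ⊗[k] H :=
  (TensorProduct.lift (crossedMul k A H σ f)) ∘ₗ (TensorProduct.map u v) ∘ₗ
    (Coalgebra.comul (R := k))

/-- The unit of the convolution algebra `Hom_k(H, A #_f H)`: `h ↦ ε(h) 1_E`. -/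
def convOne : H →ₗ[k] A ⊗[k] H :=
  (LinearMap.toSpanSingleton k (A ⊗[k] H) (oneE k A H)) ∘ₗ (Coalgebra.counit (R := k))

/-- Sum over iterated (right-nested) Sweedler components:
`swSum n c₁ c₂ r h F = ∑ F (h⁽¹⁾, …, h⁽ʳ⁺¹⁾)`. -/
def swSum {M : Type*} [AddCommMonoid M] (n : H → ℕ) (c₁ c₂ : H → ℕ → H) :
    (r : ℕ) → H → ((Fin (r + 1) → H) → M) → M
  | 0, h, F => F (fun _ => h)
  | (r + 1), h, F =>
      ∑ i ∈ Finset.range (n h), swSum n c₁ c₂ r (c₂ h i) (fun g => F (Fin.cons (c₁ h i) g))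

/-- The product of a list of elements of the crossed product. -/
def prodE (σ : H →ₗ[k] A →ₗ[k] A) (f : H →ₗ[k] H →ₗ[k] A) :
    List (A ⊗[k] H) → A ⊗[k] H
  | [] => oneE k A H
  | x :: L => crossedMul k A H σ f x (prodE σ f L)

end CrossedProduct
section Statement12

open PiTensorProduct

variable (k A H : Type*) [CommRing k] [Ring A] [Algebra k A] [Ring H] [HopfAlgebra k H]

/-- The modules `E ⊗ Ā^{⊗r}` of the Hochschild complex of `A` with coefficients in
`E = A #_f H`, where `Ā = A / k·1_A`. -/
abbrev HochM (r : ℕ) : Type _ :=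
  (A ⊗[k] H) ⊗[k] (⨂[k]^r (A ⧸ (Submodule.span k {(1 : A)})))

/-!
The conjugation `Θ u w x = γ(w) x γ⁻¹(u)` satisfies
`Θ h⁽¹⁾ w x · a^{h⁽²⁾} = Θ h w (x a)` and `a^{h⁽¹⁾} · Θ u h⁽²⁾ x = Θ u h (a x)`.
The second identity is `γ(h) a = a^{h⁽¹⁾} γ(h⁽²⁾)`. The first one is
`γ⁻¹(h⁽¹⁾) a^{h⁽²⁾} = a γ⁻¹(h)`, which comes from the twisted module condition: in the convolution
algebra of `H ⊗ H` the latter says that `f` intertwines `a^{hl}` with `(a^l)^h`, so `f⁻¹`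
intertwines them in the other direction. Together with `(ab)^h = a^{h⁽¹⁾} b^{h⁽²⁾}`, these
identities show that each face of the Hochschild boundary undoes one comultiplication of `h`; by
coassociativity every face commutes with `ϑ^h` separately.
-/

section LinearMaps

variable {k M N P R : Type*} [CommSemiring k] [AddCommMonoid M] [Module k M] [AddCommMonoid N]
  [Module k N] [AddCommMonoid P] [Module k P] [Semiring R] [Algebra k R]

attribute [fun_prop] IsLinearMap

@[fun_prop]
theorem isLinearMap_id' : IsLinearMap k fun x : M => x := LinearMap.id.isLinear

@[fun_prop]
theorem isLinearMap_comp {f : N → P} {g : M → N} (hf : IsLinearMap k f) (hg : IsLinearMap k g) :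
    IsLinearMap k fun x => f (g x) := (hf.mk' f ∘ₗ hg.mk' g).isLinear

@[fun_prop]
theorem isLinearMap_apply (φ : N →ₗ[k] P) {f : M → N} (hf : IsLinearMap k f) :
    IsLinearMap k fun x => φ (f x) := (φ ∘ₗ hf.mk' f).isLinear

@[fun_prop]
theorem isLinearMap_eval {f : M → N →ₗ[k] P} (hf : IsLinearMap k f) (y : N) :
    IsLinearMap k fun x => f x y := (LinearMap.applyₗ y ∘ₗ hf.mk' f).isLinear

@[fun_prop]
theorem isLinearMap_tmul_left {f : M → N} (hf : IsLinearMap k f) (y : P) :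
    IsLinearMap k fun x => f x ⊗ₜ[k] y := ((TensorProduct.mk k N P).flip y ∘ₗ hf.mk' f).isLinear

@[fun_prop]
theorem isLinearMap_tmul_right {f : M → N} (hf : IsLinearMap k f) (y : P) :
    IsLinearMap k fun x => y ⊗ₜ[k] f x := (TensorProduct.mk k P N y ∘ₗ hf.mk' f).isLinear

@[fun_prop]
theorem isLinearMap_mul_left {f : M → R} (hf : IsLinearMap k f) (r : R) :
    IsLinearMap k fun x => f x * r := (LinearMap.mulRight k r ∘ₗ hf.mk' f).isLinear

@[fun_prop]
theorem isLinearMap_mul_right {f : M → R} (hf : IsLinearMap k f) (r : R) :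
    IsLinearMap k fun x => r * f x := (LinearMap.mulLeft k r ∘ₗ hf.mk' f).isLinear

@[fun_prop]
theorem isLinearMap_smul_left [Module R N] [IsScalarTower k R N] {f : M → R}
    (hf : IsLinearMap k f) (y : N) : IsLinearMap k fun x => f x • y :=
  ⟨fun _ _ => by rw [hf.map_add, add_smul], fun _ _ => by rw [hf.map_smul, smul_assoc]⟩

@[fun_prop]
theorem isLinearMap_smul_right {S : Type*} [Monoid S] [DistribMulAction S N] [SMulCommClass k S N]
    {f : M → N} (hf : IsLinearMap k f) (r : S) : IsLinearMap k fun x => r • f x :=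
  ⟨fun _ _ => by rw [hf.map_add, smul_add],
    fun _ _ => by rw [hf.map_smul]; exact (smul_comm _ _ _).symm⟩

@[fun_prop]
theorem isLinearMap_curryLeft {n : ℕ} {F : N → MultilinearMap k (fun _ : Fin (n + 1) => M) P}
    (hF : IsLinearMap k F) : IsLinearMap k fun x => (F x).curryLeft :=
  ((multilinearCurryLeftEquiv k (fun _ => M) P).toLinearMap ∘ₗ hF.mk' F).isLinear

theorem exists_linearMap₂_eq {F : M → N → P} (hF₁ : ∀ y, IsLinearMap k fun x => F x y)
    (hF₂ : ∀ x, IsLinearMap k fun y => F x y) :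
    ∃ B : M →ₗ[k] N →ₗ[k] P, (fun x y => B x y) = F :=
  ⟨LinearMap.mk₂ k F (fun _ _ y => (hF₁ y).map_add _ _) (fun _ _ y => (hF₁ y).map_smul _ _)
    (fun x _ _ => (hF₂ x).map_add _ _) (fun _ x _ => (hF₂ x).map_smul _ _), rfl⟩

end LinearMaps

section Sweedler

open Coalgebra

variable {k C M N : Type*} [CommSemiring k] [AddCommMonoid C] [Module k C] [Coalgebra k C]
  [AddCommMonoid M] [Module k M] [AddCommMonoid N] [Module k N]

variable (k) in
/-- The Sweedler sum `∑ F (h⁽¹⁾) (h⁽²⁾)`, for a chosen representation of the comultiplication of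
`h`; for bilinear `F` it does not depend on that choice, see `sum_repr_eq_sweedlerSum`. -/
noncomputable def sweedlerSum (h : C) (F : C → C → M) : M :=
  ∑ i ∈ (ℛ k h).index, F ((ℛ k h).left i) ((ℛ k h).right i)

theorem sum_tmul_eq_comul (h : C) :
    ∑ i ∈ (ℛ k h).index, (ℛ k h).left i ⊗ₜ (ℛ k h).right i = comul (R := k) h :=
  (ℛ k h).eq

theorem lift_comul (B : C →ₗ[k] C →ₗ[k] M) (h : C) :
    TensorProduct.lift B (comul h) = sweedlerSum k h fun x y => B x y := by
  simp only [← sum_tmul_eq_comul, map_sum, TensorProduct.lift.tmul, sweedlerSum]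

theorem sum_repr_eq_sweedlerSum {ι : Type*} {h : C} (𝓡 : Repr k h ι) (F : C → C → M)
    (hF₁ : ∀ y, IsLinearMap k fun x => F x y := by fun_prop)
    (hF₂ : ∀ x, IsLinearMap k fun y => F x y := by fun_prop) :
    ∑ i ∈ 𝓡.index, F (𝓡.left i) (𝓡.right i) = sweedlerSum k h F := by
  obtain ⟨B, rfl⟩ := exists_linearMap₂_eq hF₁ hF₂
  simp only [← lift_comul, ← 𝓡.eq, map_sum, TensorProduct.lift.tmul]

theorem map_sweedlerSum {f : M → N} (hf : IsLinearMap k f) (h : C) (F : C → C → M) :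
    f (sweedlerSum k h F) = sweedlerSum k h fun x y => f (F x y) :=
  map_sum (hf.mk' f) _ _

theorem smul_sweedlerSum {S P : Type*} [AddCommMonoid P] [DistribSMul S P] (s : S) (h : C)
    (F : C → C → P) :
    s • sweedlerSum k h F = sweedlerSum k h fun x y => s • F x y :=
  Finset.smul_sum

theorem sweedlerSum_smul {R P : Type*} [Semiring R] [AddCommMonoid P] [Module R P] (h : C)
    (F : C → C → R) (m : P) :
    sweedlerSum k h F • m = sweedlerSum k h fun x y => F x y • m :=
  Finset.sum_smul

theorem sweedlerSum_comm {D P : Type*} [AddCommMonoid D] [Module k D] [Coalgebra k D]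
    [AddCommMonoid P] (g : C) (h : D) (F : C → C → D → D → P) :
    (sweedlerSum k g fun x y => sweedlerSum k h fun z w => F x y z w) =
      sweedlerSum k h fun z w => sweedlerSum k g fun x y => F x y z w :=
  Finset.sum_comm

@[fun_prop]
theorem isLinearMap_sweedlerSum {F : M → C → C → N} (hF : ∀ y z, IsLinearMap k fun x => F x y z)
    (h : C) : IsLinearMap k fun x => sweedlerSum k h fun y z => F x y z :=
  ⟨fun _ _ => by simp only [sweedlerSum, (hF _ _).map_add, Finset.sum_add_distrib],
    fun _ _ => by simp only [sweedlerSum, (hF _ _).map_smul, Finset.smul_sum]⟩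

@[fun_prop]
theorem isLinearMap_sweedlerSum_base {F : C → C → M} {f : N → C} (hf : IsLinearMap k f)
    (hF₁ : ∀ y, IsLinearMap k fun x => F x y) (hF₂ : ∀ x, IsLinearMap k fun y => F x y) :
    IsLinearMap k fun n => sweedlerSum k (f n) F := by
  obtain ⟨B, rfl⟩ := exists_linearMap₂_eq hF₁ hF₂
  simp only [← lift_comul]
  fun_prop

theorem sweedlerSum_coassoc (F : C → C → C → M)
    (hF₁ : ∀ y z, IsLinearMap k fun x => F x y z := by fun_prop)
    (hF₂ : ∀ x z, IsLinearMap k fun y => F x y z := by fun_prop)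
    (hF₃ : ∀ x y, IsLinearMap k fun z => F x y z := by fun_prop) (h : C) :
    (sweedlerSum k h fun x t => sweedlerSum k t fun y z => F x y z) =
      sweedlerSum k h fun t z => sweedlerSum k t fun x y => F x y z := by
  choose B hB using fun x => exists_linearMap₂_eq (hF₂ x) (hF₃ x)
  replace hB x y z : B x y z = F x y z := congrFun (congrFun (hB x) y) z
  have hB_lin : IsLinearMap k fun x => TensorProduct.lift (B x) :=
    ⟨fun _ _ => by ext; simp [hB, (hF₁ _ _).map_add],
      fun _ _ => by ext; simp [hB, (hF₁ _ _).map_smul]⟩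
  have key := congrArg (TensorProduct.lift (hB_lin.mk' _)) (coassoc_apply (R := k) h)
  simpa only [← sum_tmul_eq_comul, map_sum, LinearMap.rTensor_tmul, LinearMap.lTensor_tmul,
    sum_tmul, tmul_sum, TensorProduct.assoc_tmul, TensorProduct.lift.tmul, IsLinearMap.mk'_apply,
    hB, sweedlerSum] using key.symm

theorem sweedlerSum_counit_left {F : C → M} (hF : IsLinearMap k F) (h : C) :
    (sweedlerSum k h fun x y => counit (R := k) x • F y) = F h := by
  simpa only [sweedlerSum, map_sum, map_smul, IsLinearMap.mk'_apply] using
    congrArg (hF.mk' F) (sum_counit_smul (ℛ k h))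

theorem sweedlerSum_tmul {D : Type*} [AddCommMonoid D] [Module k D] [Coalgebra k D]
    (F : C ⊗[k] D → C ⊗[k] D → M)
    (hF₁ : ∀ y, IsLinearMap k fun x => F x y := by fun_prop)
    (hF₂ : ∀ x, IsLinearMap k fun y => F x y := by fun_prop) (g : C) (h : D) :
    sweedlerSum k (g ⊗ₜ h) F =
      sweedlerSum k g fun x y => sweedlerSum k h fun z w => F (x ⊗ₜ z) (y ⊗ₜ w) := by
  obtain ⟨B, rfl⟩ := exists_linearMap₂_eq hF₁ hF₂
  rw [← lift_comul, TensorProduct.comul_tmul, ← sum_tmul_eq_comul g, ← sum_tmul_eq_comul h]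
  simp only [sum_tmul, tmul_sum, map_sum, AlgebraTensorModule.tensorTensorTensorComm_tmul,
    TensorProduct.lift.tmul, sweedlerSum]
  exact Finset.sum_comm

theorem sweedlerSum_coalgHom {D : Type*} [AddCommMonoid D] [Module k D] [Coalgebra k D]
    (φ : C →ₗc[k] D) (F : D → D → M)
    (hF₁ : ∀ y, IsLinearMap k fun x => F x y := by fun_prop)
    (hF₂ : ∀ x, IsLinearMap k fun y => F x y := by fun_prop) (h : C) :
    sweedlerSum k (φ h) F = sweedlerSum k h fun x y => F (φ x) (φ y) :=
  (sum_repr_eq_sweedlerSum ((ℛ k h).induced φ) F hF₁ hF₂).symm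

end Sweedler

section Hopf

open Coalgebra HopfAlgebra

variable {k H M : Type*} [CommSemiring k] [Semiring H] [AddCommMonoid M] [Module k M]

theorem sweedlerSum_one [Bialgebra k H] (F : H → H → M)
    (hF₁ : ∀ y, IsLinearMap k fun x => F x y := by fun_prop)
    (hF₂ : ∀ x, IsLinearMap k fun y => F x y := by fun_prop) : sweedlerSum k 1 F = F 1 1 := by
  obtain ⟨B, rfl⟩ := exists_linearMap₂_eq hF₁ hF₂
  rw [← lift_comul, Bialgebra.comul_one, Algebra.TensorProduct.one_def, TensorProduct.lift.tmul]

variable [HopfAlgebra k H]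

theorem sweedlerSum_antipode_mul {F : H → M} (hF : IsLinearMap k F) (h : H) :
    (sweedlerSum k h fun x y => F (antipode k x * y)) = counit (R := k) h • F 1 := by
  have key := congrArg (hF.mk' F) (mul_antipode_rTensor_comul_apply (R := k) h)
  simpa only [← sum_tmul_eq_comul, map_sum, LinearMap.rTensor_tmul, LinearMap.mul'_apply,
    Algebra.algebraMap_eq_smul_one, map_smul, IsLinearMap.mk'_apply, sweedlerSum] using key

theorem convMul_apply_eq_sweedlerSum {C R : Type*} [AddCommMonoid C] [Module k C] [Coalgebra k C]
    [Semiring R] [Algebra k R] (φ ψ : WithConv (C →ₗ[k] R)) (c : C) :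
    (φ * ψ) c = sweedlerSum k c fun x y => φ x * ψ y :=
  (ℛ k c).convMul_apply φ ψ

theorem sweedlerSum_antipode_tmul_mul_comul (a h : H) :
    (sweedlerSum k h fun x t => (antipode k x ⊗ₜ[k] a) * comul t) = 1 ⊗ₜ[k] (a * h) := by
  have expand (x t : H) : (antipode k x ⊗ₜ[k] a) * comul t =
      sweedlerSum k t fun y z => (antipode k x * y) ⊗ₜ[k] (a * z) := by
    simp only [← sum_tmul_eq_comul, Finset.mul_sum, Algebra.TensorProduct.tmul_mul_tmul,
      sweedlerSum]
  simp only [expand]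
  rw [sweedlerSum_coassoc fun x y z => (antipode k x * y) ⊗ₜ[k] (a * z)]
  have cancel (t z : H) :
      (sweedlerSum k t fun x y => (antipode k x * y) ⊗ₜ[k] (a * z)) =
        counit (R := k) t • (1 : H) ⊗ₜ[k] (a * z) :=
    sweedlerSum_antipode_mul (F := fun u => u ⊗ₜ[k] (a * z)) (by fun_prop) t
  simp only [cancel]
  exact sweedlerSum_counit_left (F := fun z => (1 : H) ⊗ₜ[k] (a * z)) (by fun_prop) h

theorem comul_antipode (h : H) :
    comul (R := k) (antipode k h) = sweedlerSum k h fun x y => antipode k y ⊗ₜ antipode k x := by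
  let G : H →ₗ[k] H ⊗[k] H := IsLinearMap.mk'
    (fun h => sweedlerSum k h fun x y => antipode k y ⊗ₜ antipode k x) (by fun_prop)
  have hl : WithConv.toConv G * WithConv.toConv (comul (R := k) (A := H)) = 1 := by
    ext h
    calc (WithConv.toConv G * WithConv.toConv (comul (R := k) (A := H))) h
      _ = sweedlerSum k h fun p q => sweedlerSum k p fun x y =>
            (antipode k y ⊗ₜ antipode k x) * comul q := by
          rw [convMul_apply_eq_sweedlerSum]
          simp only [G, sweedlerSum, ← Finset.sum_mul]; rfl
      _ = sweedlerSum k h fun x t => 1 ⊗ₜ (antipode k x * t) := by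
          rw [← sweedlerSum_coassoc fun x y q => (antipode k y ⊗ₜ[k] antipode k x) * comul q]
          simp only [sweedlerSum_antipode_tmul_mul_comul]
      _ = counit (R := k) h • (1 : H) ⊗ₜ (1 : H) :=
          sweedlerSum_antipode_mul (F := fun u => (1 : H) ⊗ₜ[k] u) (by fun_prop) h
      _ = (1 : WithConv (H →ₗ[k] H ⊗[k] H)) h := by
          rw [LinearMap.convOne_apply, Algebra.algebraMap_eq_smul_one,
            Algebra.TensorProduct.one_def]
  have hG := congrArg (· h) (left_inv_eq_right_inv hl LinearMap.comul_right_inv)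
  exact hG.symm

theorem sweedlerSum_antipode (F : H → H → M)
    (hF₁ : ∀ y, IsLinearMap k fun x => F x y := by fun_prop)
    (hF₂ : ∀ x, IsLinearMap k fun y => F x y := by fun_prop) (h : H) :
    sweedlerSum k (antipode k h) F =
      sweedlerSum k h fun x y => F (antipode k y) (antipode k x) := by
  obtain ⟨B, rfl⟩ := exists_linearMap₂_eq hF₁ hF₂
  rw [← lift_comul, comul_antipode, map_sweedlerSum (LinearMap.isLinear _)]
  simp only [TensorProduct.lift.tmul]

end Hopf

section Measuring

variable {k A C : Type*} [CommSemiring k] [Semiring A] [Algebra k A] [AddCommMonoid C] [Module k C]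
  [Coalgebra k C]

/-- The coalgebra `C` measures the algebra `A` through `σ`. -/
structure IsMeasuring (σ : C →ₗ[k] A →ₗ[k] A) : Prop where
  map_mul (h : C) (a b : A) : σ h (a * b) = sweedlerSum k h fun x y => σ x a * σ y b
  map_one (h : C) : σ h 1 = Coalgebra.counit (R := k) h • (1 : A)

end Measuring

section CrossedMul

open Coalgebra HopfAlgebra

variable {k A H : Type*} [CommRing k] [Ring A] [Algebra k A] [Ring H] [HopfAlgebra k H]
  {σ : H →ₗ[k] A →ₗ[k] A} {f finv : H →ₗ[k] H →ₗ[k] A} {n : H → ℕ} {c₁ c₂ : H → ℕ → H}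

theorem IsSweedlerRep.sum_eq {M : Type*} [AddCommMonoid M] [Module k M]
    (hrep : IsSweedlerRep k H n c₁ c₂) (h : H) (F : H → H → M)
    (hF₁ : ∀ y, IsLinearMap k fun x => F x y := by fun_prop)
    (hF₂ : ∀ x, IsLinearMap k fun y => F x y := by fun_prop) :
    ∑ i ∈ Finset.range (n h), F (c₁ h i) (c₂ h i) = sweedlerSum k h F :=
  sum_repr_eq_sweedlerSum ⟨Finset.range (n h), c₁ h, c₂ h, (hrep h).symm⟩ F hF₁ hF₂

theorem IsSweedlerRep.convMul_apply_tmul (hrep : IsSweedlerRep k H n c₁ c₂)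
    (φ ψ : WithConv (H ⊗[k] H →ₗ[k] A)) (g h : H) :
    (φ * ψ) (g ⊗ₜ h) = ∑ i ∈ Finset.range (n g), ∑ j ∈ Finset.range (n h),
      φ (c₁ g i ⊗ₜ c₁ h j) * ψ (c₂ g i ⊗ₜ c₂ h j) := by
  rw [LinearMap.convMul_apply, TensorProduct.comul_tmul, hrep g, hrep h]
  simp only [sum_tmul, tmul_sum, map_sum, AlgebraTensorModule.tensorTensorTensorComm_tmul,
    map_tmul, LinearMap.mul'_apply]
  exact Finset.sum_comm

theorem IsWeakAction.isMeasuring (hrep : IsSweedlerRep k H n c₁ c₂)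
    (hweak : IsWeakAction k A H n c₁ c₂ σ) : IsMeasuring σ where
  map_mul h a b := (hweak.1 h a b).trans (hrep.sum_eq h fun x y => σ x a * σ y b)
  map_one := hweak.2.1

local notation:70 x:70 " ⋆ " y:71 => crossedMul k A H σ f x y

local notation "γ" => gam k A H

theorem tmul_eq_smul_gam (a : A) (h : H) : a ⊗ₜ[k] h = a • γ h := by
  rw [gam, TensorProduct.mk_apply, smul_tmul', smul_eq_mul, mul_one]

theorem crossedMul_tmul_tmul (a b : A) (h l : H) :
    (a ⊗ₜ h) ⋆ (b ⊗ₜ l) = sweedlerSum k h fun p q => sweedlerSum k (q ⊗ₜ[k] l) fun c d =>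
      (a * σ p b * TensorProduct.lift f c) • γ (LinearMap.mul' k H d) := by
  have expand (p q : H) : (sweedlerSum k (q ⊗ₜ[k] l) fun c d =>
        (a * σ p b * TensorProduct.lift f c) • γ (LinearMap.mul' k H d)) =
      sweedlerSum k q fun x y => sweedlerSum k l fun u v =>
        (a * (σ p b * f x u)) ⊗ₜ (y * v) := by
    rw [sweedlerSum_tmul fun c d => (a * σ p b * TensorProduct.lift f c) •
      γ (LinearMap.mul' k H d)]
    simp only [TensorProduct.lift.tmul, LinearMap.mul'_apply, ← tmul_eq_smul_gam,
      mul_assoc]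
  simp only [expand]
  rw [sweedlerSum_coassoc fun p x y => sweedlerSum k l fun u v =>
    (a * (σ p b * f x u)) ⊗ₜ (y * v)]
  simp only [crossedMul, TensorProduct.lift.tmul]
  simp only [LinearMap.compl₂_apply, LinearMap.comp_apply, LinearMap.llcomp_apply, curry_apply,
    LinearEquiv.coe_coe, map_tmul, ← sum_tmul_eq_comul, map_sum, LinearMap.rTensor_tmul, sum_tmul,
    LinearMap.lTensor_tmul, tmul_sum, assoc_symm_tmul, tensorTensorTensorComm_tmul, lift.tmul,
    LinearMap.mul'_apply, sweedlerSum]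
  simp only [Finset.sum_comm (s := (ℛ k l).index)]

theorem gam_crossedMul_gam (hσ : IsMeasuring σ) (g l : H) :
    γ g ⋆ γ l = sweedlerSum k (g ⊗ₜ[k] l) fun c d =>
      TensorProduct.lift f c • γ (LinearMap.mul' k H d) := by
  rw [gam, TensorProduct.mk_apply, TensorProduct.mk_apply, crossedMul_tmul_tmul]
  simp only [hσ.map_one, one_mul, smul_mul_assoc, smul_assoc]
  simp only [← smul_sweedlerSum]
  exact sweedlerSum_counit_left (F := fun q => sweedlerSum k (q ⊗ₜ l) fun c d =>
      TensorProduct.lift f c • γ (LinearMap.mul' k H d)) (by fun_prop) g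

theorem tmul_crossedMul_tmul (hσ : IsMeasuring σ) (a b : A) (h l : H) :
    (a ⊗ₜ h) ⋆ (b ⊗ₜ l) = sweedlerSum k h fun p q => (a * σ p b) • (γ q ⋆ γ l) := by
  simp only [crossedMul_tmul_tmul, gam_crossedMul_gam hσ,
    smul_sweedlerSum, mul_smul]

theorem smul_crossedMul (hσ : IsMeasuring σ) (a : A) (x y : A ⊗[k] H) :
    (a • x) ⋆ y = a • (x ⋆ y) := by
  induction x with
  | zero => simp only [smul_zero, map_zero, LinearMap.zero_apply]
  | add x₁ x₂ h₁ h₂ => simp only [smul_add, map_add, LinearMap.add_apply, h₁, h₂]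
  | tmul b h =>
    induction y with
    | zero => simp only [smul_zero, map_zero]
    | add y₁ y₂ h₁ h₂ => simp only [smul_add, map_add, h₁, h₂]
    | tmul c l =>
      simp only [smul_tmul', smul_eq_mul, tmul_crossedMul_tmul hσ, smul_sweedlerSum,
        mul_assoc, smul_smul]

theorem gam_crossedMul_smul (hσ : IsMeasuring σ) (h : H) (b : A) (y : A ⊗[k] H) :
    γ h ⋆ (b • y) = sweedlerSum k h fun p q => σ p b • (γ q ⋆ y) := by
  induction y with
  | zero => simp only [smul_zero, map_zero, sweedlerSum, Finset.sum_const_zero]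
  | add y₁ y₂ h₁ h₂ =>
    simp only [smul_add, map_add, h₁, h₂, sweedlerSum, Finset.sum_add_distrib]
  | tmul c l =>
    obtain ⟨T, expand⟩ : ∃ T : H →ₗ[k] A ⊗[k] H, ∀ (q : H) (c : A),
        γ q ⋆ (c ⊗ₜ l) = sweedlerSum k q fun x y => σ x c • T y :=
      ⟨(crossedMul k A H σ f).flip (γ l) ∘ₗ γ, fun q c => by
        rw [gam, TensorProduct.mk_apply, tmul_crossedMul_tmul hσ]
        simp only [one_mul]; rfl⟩
    simp only [smul_tmul', smul_eq_mul, expand, hσ.map_mul, smul_sweedlerSum, smul_smul]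
    rw [sweedlerSum_coassoc fun x y z => (σ x b * σ y c) • T z]
    simp only [sweedlerSum_smul]

theorem gam_crossedMul_gam_one (hσ : IsMeasuring σ) (hnormal : IsNormal k A H f) (h : H) :
    γ h ⋆ γ 1 = γ h := by
  rw [gam_crossedMul_gam hσ, sweedlerSum_tmul _ (by fun_prop) (by fun_prop), sweedlerSum_comm,
    sweedlerSum_one _ (by fun_prop) (by fun_prop)]
  simp only [TensorProduct.lift.tmul, LinearMap.mul'_apply, mul_one, (hnormal _).1, smul_assoc,
    one_smul]
  exact sweedlerSum_counit_left (LinearMap.isLinear _) h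

theorem gam_one_crossedMul_gam (hσ : IsMeasuring σ) (hnormal : IsNormal k A H f) (h : H) :
    γ 1 ⋆ γ h = γ h := by
  rw [gam_crossedMul_gam hσ, sweedlerSum_tmul _ (by fun_prop) (by fun_prop),
    sweedlerSum_one _ (by fun_prop) (by fun_prop)]
  simp only [TensorProduct.lift.tmul, LinearMap.mul'_apply, one_mul, (hnormal _).2, smul_assoc,
    one_smul]
  exact sweedlerSum_counit_left (LinearMap.isLinear _) h

theorem gam_one_crossedMul (hσ : IsMeasuring σ) (hσ_one : ∀ a, σ 1 a = a)
    (hnormal : IsNormal k A H f) (x : A ⊗[k] H) : γ 1 ⋆ x = x := by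
  induction x with
  | zero => exact map_zero _
  | add x y hx hy => rw [map_add, hx, hy]
  | tmul a h =>
    rw [tmul_eq_smul_gam, gam_crossedMul_smul hσ, sweedlerSum_one _ (by fun_prop) (by fun_prop),
      hσ_one, gam_one_crossedMul_gam hσ hnormal]

theorem tmul_one_crossedMul (hσ : IsMeasuring σ) (hσ_one : ∀ a, σ 1 a = a)
    (hnormal : IsNormal k A H f) (a : A) (x : A ⊗[k] H) : (a ⊗ₜ 1) ⋆ x = a • x := by
  rw [tmul_eq_smul_gam, smul_crossedMul hσ, gam_one_crossedMul hσ hσ_one hnormal]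

theorem gam_crossedMul_tmul_one (hσ : IsMeasuring σ) (hnormal : IsNormal k A H f) (h : H) (a : A) :
    γ h ⋆ (a ⊗ₜ 1) = sweedlerSum k h fun p q => σ p a • γ q := by
  rw [tmul_eq_smul_gam, gam_crossedMul_smul hσ]
  simp only [gam_crossedMul_gam_one hσ hnormal]

theorem crossedMul_tmul_one_crossedMul (hσ : IsMeasuring σ) (hnormal : IsNormal k A H f)
    (x : A ⊗[k] H) (a : A) (y : A ⊗[k] H) : (x ⋆ (a ⊗ₜ 1)) ⋆ y = x ⋆ (a • y) := by
  induction x with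
  | zero => simp only [map_zero, LinearMap.zero_apply]
  | add x₁ x₂ h₁ h₂ => simp only [map_add, LinearMap.add_apply, h₁, h₂]
  | tmul b h =>
    rw [tmul_eq_smul_gam, smul_crossedMul hσ, smul_crossedMul hσ, smul_crossedMul hσ,
      gam_crossedMul_tmul_one hσ hnormal, gam_crossedMul_smul hσ,
      map_sweedlerSum (f := fun z => z ⋆ y) (by fun_prop)]
    simp only [smul_crossedMul hσ]

variable (σ) in
/-- The map `h ⊗ l ↦ (a^l)^h`. -/
noncomputable def iteratedAction (a : A) : H ⊗[k] H →ₗ[k] A :=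
  TensorProduct.lift (σ.compl₂ (σ.flip a))

variable (σ) in
/-- The map `h ⊗ l ↦ a^{hl}`. -/
noncomputable def productAction (a : A) : H ⊗[k] H →ₗ[k] A :=
  σ.flip a ∘ₗ LinearMap.mul' k H

theorem iteratedAction_tmul (a : A) (h l : H) : iteratedAction σ a (h ⊗ₜ l) = σ h (σ l a) := rfl

theorem productAction_tmul (a : A) (h l : H) : productAction σ a (h ⊗ₜ l) = σ (h * l) a := rfl

theorem IsTwistedModule.semiconjBy (hrep : IsSweedlerRep k H n c₁ c₂)
    (htwisted : IsTwistedModule k A H n c₁ c₂ σ f) (a : A) :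
    SemiconjBy (WithConv.toConv (TensorProduct.lift f)) (WithConv.toConv (productAction σ a))
      (WithConv.toConv (iteratedAction σ a)) := by
  refine WithConv.ext (TensorProduct.ext' fun g l => ?_)
  simpa only [hrep.convMul_apply_tmul, iteratedAction_tmul, productAction_tmul,
    TensorProduct.lift.tmul] using (htwisted g l a).symm

theorem IsConvInverse.mul_eq_one (hrep : IsSweedlerRep k H n c₁ c₂)
    (hinv : IsConvInverse k A H n c₁ c₂ f finv) :
    WithConv.toConv (TensorProduct.lift f) * WithConv.toConv (TensorProduct.lift finv) = 1 ∧
    WithConv.toConv (TensorProduct.lift finv) * WithConv.toConv (TensorProduct.lift f) = 1 := by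
  constructor <;> refine WithConv.ext (TensorProduct.ext' fun g l => ?_) <;>
    simp only [hrep.convMul_apply_tmul, LinearMap.convOne_apply, TensorProduct.counit_tmul,
      TensorProduct.lift.tmul, Algebra.algebraMap_eq_smul_one, smul_eq_mul,
      mul_comm (counit (R := k) l)]
  · exact (hinv g l).1
  · exact (hinv g l).2

theorem lift_gam_crossedMul_gam (hσ : IsMeasuring σ) (c : H ⊗[k] H) :
    TensorProduct.lift ((crossedMul k A H σ f).compl₁₂ γ γ) c =
      sweedlerSum k c fun d e => TensorProduct.lift f d • γ (LinearMap.mul' k H e) := by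
  have hlin : IsLinearMap k fun c : H ⊗[k] H => sweedlerSum k c fun d e =>
      TensorProduct.lift f d • γ (LinearMap.mul' k H e) := by fun_prop
  exact LinearMap.congr_fun
    (TensorProduct.ext' (h := hlin.mk' _) fun g l => gam_crossedMul_gam hσ g l) c

theorem gam_crossedMul_gam_crossedMul_tmul_one (hrep : IsSweedlerRep k H n c₁ c₂)
    (hσ : IsMeasuring σ) (hnormal : IsNormal k A H f)
    (htwisted : IsTwistedModule k A H n c₁ c₂ σ f) (g l : H) (a : A) :
    (γ g ⋆ γ l) ⋆ (a ⊗ₜ 1) = γ g ⋆ (γ l ⋆ (a ⊗ₜ 1)) := by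
  have expand (d : H ⊗[k] H) : γ (LinearMap.mul' k H d) ⋆ (a ⊗ₜ 1) =
      sweedlerSum k d fun d e => productAction σ a d • γ (LinearMap.mul' k H e) :=
    (gam_crossedMul_tmul_one hσ hnormal _ a).trans
      (sweedlerSum_coalgHom (Bialgebra.mulCoalgHom k H) (fun p q => σ p a • γ q)
        (by fun_prop) (by fun_prop) d)
  calc (γ g ⋆ γ l) ⋆ (a ⊗ₜ 1)
    _ = sweedlerSum k (g ⊗ₜ[k] l) fun c d => TensorProduct.lift f c •
          sweedlerSum k d fun d e => productAction σ a d • γ (LinearMap.mul' k H e) := by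
      rw [gam_crossedMul_gam hσ, map_sweedlerSum (f := fun z => z ⋆ (a ⊗ₜ 1)) (by fun_prop)]
      simp only [smul_crossedMul hσ, expand]
    _ = sweedlerSum k (g ⊗ₜ[k] l) fun c e => sweedlerSum k c fun c d =>
          (TensorProduct.lift f c * productAction σ a d) • γ (LinearMap.mul' k H e) := by
      rw [← sweedlerSum_coassoc fun c d e =>
        (TensorProduct.lift f c * productAction σ a d) • γ (LinearMap.mul' k H e)]
      simp only [smul_sweedlerSum, smul_smul]
    _ = sweedlerSum k (g ⊗ₜ[k] l) fun c e => sweedlerSum k c fun c d =>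
          (iteratedAction σ a c * TensorProduct.lift f d) • γ (LinearMap.mul' k H e) := by
      have key (c : H ⊗[k] H) := congrArg (· c) (htwisted.semiconjBy hrep a).eq
      simp only [convMul_apply_eq_sweedlerSum] at key
      simp only [← sweedlerSum_smul]
      exact congrArg (sweedlerSum k _) (funext₂ fun c e => congrArg (· • _) (key c))
    _ = sweedlerSum k (g ⊗ₜ[k] l) fun c d => iteratedAction σ a c •
          sweedlerSum k d fun d e => TensorProduct.lift f d • γ (LinearMap.mul' k H e) := by
      rw [← sweedlerSum_coassoc fun c d e =>
        (iteratedAction σ a c * TensorProduct.lift f d) • γ (LinearMap.mul' k H e)]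
      simp only [smul_sweedlerSum, smul_smul]
    _ = γ g ⋆ (γ l ⋆ (a ⊗ₜ 1)) := by
      simp only [← lift_gam_crossedMul_gam hσ]
      rw [gam_crossedMul_tmul_one hσ hnormal, sweedlerSum_tmul _ (by fun_prop) (by fun_prop),
        map_sweedlerSum (LinearMap.isLinear _), sweedlerSum_comm]
      simp only [gam_crossedMul_smul hσ, iteratedAction_tmul, TensorProduct.lift.tmul,
        LinearMap.compl₁₂_apply]

theorem crossedMul_crossedMul_tmul_one (hrep : IsSweedlerRep k H n c₁ c₂)
    (hσ : IsMeasuring σ) (hnormal : IsNormal k A H f)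
    (htwisted : IsTwistedModule k A H n c₁ c₂ σ f) (x y : A ⊗[k] H) (a : A) :
    (x ⋆ y) ⋆ (a ⊗ₜ 1) = x ⋆ (y ⋆ (a ⊗ₜ 1)) := by
  induction x with
  | zero => simp only [map_zero, LinearMap.zero_apply]
  | add x₁ x₂ h₁ h₂ => simp only [map_add, LinearMap.add_apply, h₁, h₂]
  | tmul b g =>
    induction y with
    | zero => simp only [map_zero, LinearMap.zero_apply]
    | add y₁ y₂ h₁ h₂ => simp only [map_add, LinearMap.add_apply, h₁, h₂]
    | tmul c l =>
      rw [tmul_eq_smul_gam b, tmul_eq_smul_gam c]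
      simp only [smul_crossedMul hσ, gam_crossedMul_smul hσ]
      rw [map_sweedlerSum (f := fun z => z ⋆ (a ⊗ₜ 1)) (by fun_prop)]
      simp only [smul_crossedMul hσ,
        gam_crossedMul_gam_crossedMul_tmul_one hrep hσ hnormal htwisted]

/-- The element `∑ f⁻¹(g⁽¹⁾, l) # g⁽²⁾`; thus `γ⁻¹(h)` is its value at `S(h⁽¹⁾)`, `h⁽²⁾`. -/
noncomputable def invCocycleGam (finv : H →ₗ[k] H →ₗ[k] A) (g l : H) : A ⊗[k] H :=
  sweedlerSum k g fun p q => finv p l • γ q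

@[fun_prop]
theorem isLinearMap_invCocycleGam_left {M : Type*} [AddCommMonoid M] [Module k M] {φ : M → H}
    (hφ : IsLinearMap k φ) (l : H) : IsLinearMap k fun x => invCocycleGam finv (φ x) l := by
  unfold invCocycleGam
  fun_prop

@[fun_prop]
theorem isLinearMap_invCocycleGam_right {M : Type*} [AddCommMonoid M] [Module k M] {φ : M → H}
    (hφ : IsLinearMap k φ) (g : H) : IsLinearMap k fun x => invCocycleGam finv g (φ x) := by
  unfold invCocycleGam
  fun_prop

theorem gammaInv_eq_sweedlerSum (h : H) :
    gammaInv k A H finv h = sweedlerSum k h fun x t => invCocycleGam finv (antipode k x) t := by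
  have expand (x t : H) : invCocycleGam finv (antipode k x) t =
      sweedlerSum k x fun u v => finv (antipode k v) t ⊗ₜ antipode k u := by
    rw [invCocycleGam, sweedlerSum_antipode fun p q => finv p t • γ q]
    simp only [tmul_eq_smul_gam]
  simp only [expand]
  rw [← sweedlerSum_coassoc fun u v t => finv (antipode k v) t ⊗ₜ antipode k u]
  simp [gammaInv, ← sum_tmul_eq_comul, tmul_sum, sweedlerSum]

theorem sweedlerSum_invCocycleGam_crossedMul (hrep : IsSweedlerRep k H n c₁ c₂)
    (hσ : IsMeasuring σ) (hnormal : IsNormal k A H f)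
    (htwisted : IsTwistedModule k A H n c₁ c₂ σ f) (hinv : IsConvInverse k A H n c₁ c₂ f finv)
    (g l : H) (a : A) :
    (sweedlerSum k l fun y z => invCocycleGam finv g y ⋆ (σ z a ⊗ₜ 1)) =
      sweedlerSum k g fun u v => sweedlerSum k l fun y z =>
        σ (u * y) a • invCocycleGam finv v z := by
  have hsemi : SemiconjBy (WithConv.toConv (TensorProduct.lift finv))
      (WithConv.toConv (iteratedAction σ a)) (WithConv.toConv (productAction σ a)) :=
    SemiconjBy.units_inv_symm_left (a := ⟨_, _, (hinv.mul_eq_one hrep).1, (hinv.mul_eq_one hrep).2⟩)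
      (htwisted.semiconjBy hrep a)
  have key (t : H) : (sweedlerSum k t fun p u => sweedlerSum k l fun y z =>
        finv p y * σ u (σ z a)) =
      sweedlerSum k t fun u p => sweedlerSum k l fun y z => σ (u * y) a * finv p z := by
    have key := congrArg (· (t ⊗ₜ[k] l)) hsemi.eq
    simp only [convMul_apply_eq_sweedlerSum] at key
    rwa [sweedlerSum_tmul _ (by fun_prop) (by fun_prop),
      sweedlerSum_tmul _ (by fun_prop) (by fun_prop)] at key
  calc (sweedlerSum k l fun y z => invCocycleGam finv g y ⋆ (σ z a ⊗ₜ 1))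
    _ = sweedlerSum k l fun y z => sweedlerSum k g fun p t =>
          sweedlerSum k t fun u v => (finv p y * σ u (σ z a)) • γ v := by
      refine congrArg (sweedlerSum k l) (funext₂ fun y z => ?_)
      rw [invCocycleGam, map_sweedlerSum (f := fun x => x ⋆ (σ z a ⊗ₜ 1)) (by fun_prop)]
      simp only [smul_crossedMul hσ, gam_crossedMul_tmul_one hσ hnormal, smul_sweedlerSum,
        smul_smul]
    _ = sweedlerSum k g fun p t => sweedlerSum k t fun u v => sweedlerSum k l fun y z =>
          (finv p y * σ u (σ z a)) • γ v := by
      rw [sweedlerSum_comm]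
      simp only [sweedlerSum_comm l]
    _ = sweedlerSum k g fun t v => (sweedlerSum k t fun p u => sweedlerSum k l fun y z =>
          finv p y * σ u (σ z a)) • γ v := by
      rw [sweedlerSum_coassoc fun p u v => sweedlerSum k l fun y z =>
        (finv p y * σ u (σ z a)) • γ v]
      simp only [sweedlerSum_smul]
    _ = sweedlerSum k g fun t v => (sweedlerSum k t fun u p => sweedlerSum k l fun y z =>
          σ (u * y) a * finv p z) • γ v := by
      simp only [key]
    _ = sweedlerSum k g fun u v => sweedlerSum k l fun y z =>
          σ (u * y) a • invCocycleGam finv v z := by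
      simp only [invCocycleGam, smul_sweedlerSum, smul_smul, sweedlerSum_comm l,
        sweedlerSum_smul]
      rw [sweedlerSum_coassoc fun u p v => sweedlerSum k l fun y z =>
        (σ (u * y) a * finv p z) • γ v]

theorem sweedlerSum_gammaInv_crossedMul (hrep : IsSweedlerRep k H n c₁ c₂)
    (hσ : IsMeasuring σ) (hσ_one : ∀ a, σ 1 a = a) (hnormal : IsNormal k A H f)
    (htwisted : IsTwistedModule k A H n c₁ c₂ σ f) (hinv : IsConvInverse k A H n c₁ c₂ f finv)
    (h : H) (a : A) :
    (sweedlerSum k h fun x y => gammaInv k A H finv x ⋆ (σ y a ⊗ₜ 1)) =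
      a • gammaInv k A H finv h := by
  have cancel (v t : H) : (sweedlerSum k t fun y z => sweedlerSum k y fun u y =>
        σ (antipode k u * y) a • invCocycleGam finv (antipode k v) z) =
      a • invCocycleGam finv (antipode k v) t := by
    have inner (y z : H) : (sweedlerSum k y fun u y =>
          σ (antipode k u * y) a • invCocycleGam finv (antipode k v) z) =
        counit (R := k) y • a • invCocycleGam finv (antipode k v) z := by
      rw [sweedlerSum_antipode_mul (F := fun u => σ u a • invCocycleGam finv (antipode k v) z)
        (by fun_prop), hσ_one]
    simp only [inner]
    exact sweedlerSum_counit_left (F := fun z => a • invCocycleGam finv (antipode k v) z)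
      (by fun_prop) t
  calc (sweedlerSum k h fun x y => gammaInv k A H finv x ⋆ (σ y a ⊗ₜ 1))
    _ = sweedlerSum k h fun s z => sweedlerSum k s fun x y =>
          invCocycleGam finv (antipode k x) y ⋆ (σ z a ⊗ₜ 1) := by
      simp only [gammaInv_eq_sweedlerSum]
      refine congrArg (sweedlerSum k h) (funext₂ fun x z => ?_)
      rw [map_sweedlerSum (f := fun x => x ⋆ (σ z a ⊗ₜ 1)) (by fun_prop)]
    _ = sweedlerSum k h fun x t => sweedlerSum k x fun v u => sweedlerSum k t fun y z =>
          σ (antipode k u * y) a • invCocycleGam finv (antipode k v) z := by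
      rw [← sweedlerSum_coassoc fun x y z =>
        invCocycleGam finv (antipode k x) y ⋆ (σ z a ⊗ₜ 1)]
      refine congrArg (sweedlerSum k h) (funext₂ fun x t => ?_)
      rw [sweedlerSum_invCocycleGam_crossedMul hrep hσ hnormal htwisted hinv,
        sweedlerSum_antipode _ (by fun_prop) (by fun_prop)]
    _ = sweedlerSum k h fun v s => sweedlerSum k s fun u t => sweedlerSum k t fun y z =>
          σ (antipode k u * y) a • invCocycleGam finv (antipode k v) z := by
      rw [sweedlerSum_coassoc fun v u t => sweedlerSum k t fun y z =>
          σ (antipode k u * y) a • invCocycleGam finv (antipode k v) z]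
    _ = sweedlerSum k h fun v s => sweedlerSum k s fun t z => sweedlerSum k t fun u y =>
          σ (antipode k u * y) a • invCocycleGam finv (antipode k v) z := by
      refine congrArg (sweedlerSum k h) (funext₂ fun v s => ?_)
      rw [sweedlerSum_coassoc fun u y z =>
          σ (antipode k u * y) a • invCocycleGam finv (antipode k v) z]
    _ = a • gammaInv k A H finv h := by
      simp only [cancel, gammaInv_eq_sweedlerSum, smul_sweedlerSum]

variable (σ f finv) in
/-- The map `x ↦ γ(w) x γ⁻¹(u)`, as a trilinear function of `u`, `w` and `x`. -/
noncomputable def gamConj : H →ₗ[k] H →ₗ[k] A ⊗[k] H →ₗ[k] A ⊗[k] H :=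
  (LinearMap.llcomp k _ _ _ ∘ₗ (crossedMul k A H σ f).flip ∘ₗ gammaInv k A H finv).compl₂
    (crossedMul k A H σ f ∘ₗ γ)

theorem gamConj_apply (u w : H) (x : A ⊗[k] H) :
    gamConj σ f finv u w x = (γ w ⋆ x) ⋆ gammaInv k A H finv u := rfl

theorem sweedlerSum_gamConj_crossedMul (hrep : IsSweedlerRep k H n c₁ c₂)
    (hσ : IsMeasuring σ) (hσ_one : ∀ a, σ 1 a = a) (hnormal : IsNormal k A H f)
    (htwisted : IsTwistedModule k A H n c₁ c₂ σ f) (hinv : IsConvInverse k A H n c₁ c₂ f finv)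
    (h w : H) (x : A ⊗[k] H) (a : A) :
    (sweedlerSum k h fun p q => gamConj σ f finv p w x ⋆ (σ q a ⊗ₜ 1)) =
      gamConj σ f finv h w (x ⋆ (a ⊗ₜ 1)) := by
  have assoc := crossedMul_crossedMul_tmul_one (H := H) hrep hσ hnormal htwisted
  simp only [gamConj_apply, assoc]
  rw [← assoc, crossedMul_tmul_one_crossedMul hσ hnormal, ← map_sweedlerSum (LinearMap.isLinear _),
    sweedlerSum_gammaInv_crossedMul hrep hσ hσ_one hnormal htwisted hinv]

theorem sweedlerSum_crossedMul_gamConj (hσ : IsMeasuring σ) (hσ_one : ∀ a, σ 1 a = a)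
    (hnormal : IsNormal k A H f) (u h : H) (a : A) (x : A ⊗[k] H) :
    (sweedlerSum k h fun p q => (σ p a ⊗ₜ 1) ⋆ gamConj σ f finv u q x) =
      gamConj σ f finv u h ((a ⊗ₜ 1) ⋆ x) := by
  simp only [gamConj_apply, tmul_one_crossedMul hσ hσ_one hnormal, gam_crossedMul_smul hσ]
  rw [map_sweedlerSum (f := fun z => z ⋆ gammaInv k A H finv u) (by fun_prop)]
  simp only [smul_crossedMul hσ]

end CrossedMul

section SplitNth

variable {α : Type*} {n : ℕ}

/-- The tuple `v` with its `j`-th entry replaced by the two consecutive entries `p`, `q`. -/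
def splitNth (j : Fin n) (p q : α) (v : Fin n → α) : Fin (n + 1) → α :=
  j.castSucc.insertNth p (Function.update v j q)

theorem splitNth_zero_cons (p q x : α) (v : Fin n → α) :
    splitNth 0 p q (Fin.cons x v : Fin (n + 1) → α) =
      (Fin.cons p (Fin.cons q v : Fin (n + 1) → α) : Fin (n + 2) → α) := by
  rw [splitNth, Fin.update_cons_zero, Fin.castSucc_zero, Fin.insertNth_zero']

theorem splitNth_succ_cons (j : Fin n) (p q x : α) (v : Fin n → α) :
    splitNth j.succ p q (Fin.cons x v : Fin (n + 1) → α) =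
      (Fin.cons x (splitNth j p q v) : Fin (n + 2) → α) := by
  rw [splitNth, splitNth, ← Fin.cons_update, ← Fin.succ_castSucc, Fin.insertNth_succ_cons]

theorem splitNth_apply_castSucc_self (j : Fin n) (p q : α) (v : Fin n → α) :
    splitNth j p q v j.castSucc = p :=
  Fin.insertNth_apply_same _ _ _

theorem splitNth_apply_succ_self (j : Fin n) (p q : α) (v : Fin n → α) :
    splitNth j p q v j.succ = q := by
  have h := Fin.insertNth_apply_succAbove (α := fun _ => α) j.castSucc p (Function.update v j q) j
  rwa [Fin.succAbove_castSucc_self, Function.update_self] at h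

theorem splitNth_apply_castSucc_of_lt {i j : Fin n} (hij : i < j) (p q : α) (v : Fin n → α) :
    splitNth j p q v i.castSucc = v i := by
  have h := Fin.insertNth_apply_succAbove (α := fun _ => α) j.castSucc p (Function.update v j q) i
  rwa [Fin.succAbove_castSucc_of_lt _ _ hij, Function.update_of_ne hij.ne] at h

theorem splitNth_apply_succ_of_gt {i j : Fin n} (hij : j < i) (p q : α) (v : Fin n → α) :
    splitNth j p q v i.succ = v i := by
  have h := Fin.insertNth_apply_succAbove (α := fun _ => α) j.castSucc p (Function.update v j q) i
  rwa [Fin.succAbove_castSucc_of_le _ _ hij.le, Function.update_of_ne hij.ne'] at h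

theorem contractNth_splitNth {β γ : Type*} (φ : α → β → γ) (opβ : β → β → β) (opγ : γ → γ → γ)
    (j : Fin n) (p q : α) (v : Fin (n + 2) → α) (a : Fin (n + 1) → β) :
    Fin.contractNth j.castSucc opγ
        (fun i => φ (splitNth j.succ.castSucc p q v i.succ.castSucc) (a i)) =
      Function.update (fun i => φ (v i.succ.castSucc) (Fin.contractNth j.castSucc opβ a i)) j
        (opγ (φ p (a j.castSucc)) (φ q (a j.succ))) := by
  ext i
  rcases lt_trichotomy i j with hij | rfl | hij
  · have h_entry : splitNth j.succ.castSucc p q v i.castSucc.succ.castSucc = v i.succ.castSucc :=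
      splitNth_apply_castSucc_of_lt (i := i.succ.castSucc) (Nat.succ_lt_succ hij) p q v
    rw [Function.update_of_ne hij.ne, Fin.contractNth_apply_of_lt _ _ _ _ hij,
      Fin.contractNth_apply_of_lt _ _ _ _ hij, h_entry]
  · have h_left : splitNth i.succ.castSucc p q v i.castSucc.succ.castSucc = p :=
      splitNth_apply_castSucc_self i.succ.castSucc p q v
    have h_right : splitNth i.succ.castSucc p q v i.succ.succ.castSucc = q :=
      splitNth_apply_succ_self i.succ.castSucc p q v
    rw [Function.update_self, Fin.contractNth_apply_of_eq _ _ _ _ rfl, h_left, h_right]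
  · have h_entry : splitNth j.succ.castSucc p q v i.succ.succ.castSucc = v i.succ.castSucc :=
      splitNth_apply_succ_of_gt (i := i.succ.castSucc) (Nat.succ_lt_succ hij) p q v
    rw [Function.update_of_ne hij.ne', Fin.contractNth_apply_of_gt _ _ _ _ hij,
      Fin.contractNth_apply_of_gt _ _ _ _ hij, h_entry]

end SplitNth

section IteratedSweedler

variable {k C M N : Type*} [CommSemiring k] [AddCommMonoid C] [Module k C] [Coalgebra k C]
  [AddCommMonoid M] [Module k M] [AddCommMonoid N] [Module k N]

variable (k C M) in
/-- The iterated Sweedler sum `∑ F (h⁽¹⁾, …, h⁽ʳ⁺¹⁾)`, as a linear function of the multilinear map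
`F` and of `h`. -/
noncomputable def iteratedSweedlerSum :
    (r : ℕ) → MultilinearMap k (fun _ : Fin (r + 1) => C) M →ₗ[k] C →ₗ[k] M
  | 0 => (MultilinearMap.ofSubsingletonₗ k k C M (0 : Fin 1)).symm
  | r + 1 => LinearMap.lcomp k M Coalgebra.comul ∘ₗ TensorProduct.uncurry (.id k) C C M ∘ₗ
      LinearMap.llcomp k C _ _ (iteratedSweedlerSum r) ∘ₗ
        (multilinearCurryLeftEquiv k (fun _ => C) M).toLinearMap

theorem iteratedSweedlerSum_zero (F : MultilinearMap k (fun _ : Fin 1 => C) M) (h : C) :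
    iteratedSweedlerSum k C M 0 F h = F fun _ => h := rfl

theorem iteratedSweedlerSum_succ {r : ℕ} (F : MultilinearMap k (fun _ : Fin (r + 2) => C) M)
    (h : C) : iteratedSweedlerSum k C M (r + 1) F h =
      sweedlerSum k h fun x t => iteratedSweedlerSum k C M r (F.curryLeft x) t :=
  lift_comul (iteratedSweedlerSum k C M r ∘ₗ F.curryLeft) h

theorem map_iteratedSweedlerSum (φ : M →ₗ[k] N) {r : ℕ}
    (F : MultilinearMap k (fun _ : Fin (r + 1) => C) M) (h : C) :
    φ (iteratedSweedlerSum k C M r F h) =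
      iteratedSweedlerSum k C N r (φ.compMultilinearMap F) h := by
  induction r generalizing h with
  | zero => rfl
  | succ r ih =>
    rw [iteratedSweedlerSum_succ, iteratedSweedlerSum_succ, map_sweedlerSum φ.isLinear]
    simp only [ih]
    rfl

/-- Iterated coassociativity. -/
theorem iteratedSweedlerSum_eq_of_splitNth {r : ℕ}
    (F : MultilinearMap k (fun _ : Fin (r + 2) => C) M)
    (F' : MultilinearMap k (fun _ : Fin (r + 1) => C) M) (j : Fin (r + 1))
    (hF : ∀ v, (sweedlerSum k (v j) fun p q => F (splitNth j p q v)) = F' v) (h : C) :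
    iteratedSweedlerSum k C M (r + 1) F h = iteratedSweedlerSum k C M r F' h := by
  induction r generalizing h with
  | zero =>
    obtain rfl : j = 0 := Subsingleton.elim (α := Fin 1) _ _
    rw [iteratedSweedlerSum_succ, iteratedSweedlerSum_zero, ← hF]
    refine congrArg (sweedlerSum k h) (funext₂ fun x t => ?_)
    rw [iteratedSweedlerSum_zero, MultilinearMap.curryLeft_apply]
    congr 1
    ext i
    fin_cases i <;> rfl
  | succ r ih =>
    rw [iteratedSweedlerSum_succ, iteratedSweedlerSum_succ]
    refine j.cases (fun hF => ?_) (fun j hF => ?_) hF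
    · simp only [iteratedSweedlerSum_succ]
      rw [sweedlerSum_coassoc fun x y z =>
        iteratedSweedlerSum k C M r ((F.curryLeft x).curryLeft y) z]
      refine congrArg (sweedlerSum k h) (funext₂ fun t z => ?_)
      rw [← map_sweedlerSum (f := fun G => iteratedSweedlerSum k C M r G z) (by fun_prop)]
      congr 2
      ext v
      rw [MultilinearMap.curryLeft_apply, ← hF, Fin.cons_zero]
      simp only [splitNth_zero_cons]
      exact map_sweedlerSum (f := fun G : MultilinearMap k (fun _ : Fin (r + 1) => C) M => G v)
        ⟨fun _ _ => rfl, fun _ _ => rfl⟩ t _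
    · refine congrArg (sweedlerSum k h) (funext₂ fun x t => ih _ _ j (fun v => ?_) t)
      simp only [MultilinearMap.curryLeft_apply, ← hF, splitNth_succ_cons, Fin.cons_succ]

end IteratedSweedler

section Faces

variable {k A C E M : Type*} [CommSemiring k] [Semiring A] [Algebra k A]
  [AddCommMonoid C] [Module k C] [AddCommMonoid E] [Module k E] [AddCommMonoid M] [Module k M]
  {r : ℕ}

/-- A bilinear family of multilinear maps as a multilinear map with the two new arguments placed
first and last. -/
def uncurryEnds (Ψ : C →ₗ[k] C →ₗ[k] MultilinearMap k (fun _ : Fin r => C) M) :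
    MultilinearMap k (fun _ : Fin (r + 2) => C) M :=
  ((MultilinearMap.curryMidLinearEquiv k (fun _ => C) M (Fin.last r)).symm.toLinearMap ∘ₗ
    Ψ).uncurryLeft

theorem uncurryEnds_apply (Ψ : C →ₗ[k] C →ₗ[k] MultilinearMap k (fun _ : Fin r => C) M)
    (v : Fin (r + 2) → C) :
    uncurryEnds Ψ v = Ψ (v 0) (v (Fin.last _)) fun i => v i.succ.castSucc := by
  simp [uncurryEnds, Fin.tail_def, Fin.removeNth_last, Fin.init_def]

/-- The cochain operator dual to `x ⊗ a₁ ⊗ ⋯ ↦ x a₁ ⊗ a₂ ⊗ ⋯`, where `ρ` is the right action. -/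
def frontFace (ρ : E →ₗ[k] A →ₗ[k] E) (D : E →ₗ[k] MultilinearMap k (fun _ : Fin r => A) M) :
    E →ₗ[k] MultilinearMap k (fun _ : Fin (r + 1) => A) M :=
  (multilinearCurryLeftEquiv k (fun _ => A) M).symm.toLinearMap ∘ₗ ρ.compr₂ D

theorem frontFace_apply (ρ : E →ₗ[k] A →ₗ[k] E)
    (D : E →ₗ[k] MultilinearMap k (fun _ : Fin r => A) M) (x : E) (a : Fin (r + 1) → A) :
    frontFace ρ D x a = D (ρ x (a 0)) fun i => a i.succ := rfl

/-- The cochain operator dual to `x ⊗ ⋯ ⊗ a_r ↦ a_r x ⊗ ⋯ ⊗ a_{r-1}`, where `μ` is the left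
action. -/
def backFace (μ : A →ₗ[k] E →ₗ[k] E) (D : E →ₗ[k] MultilinearMap k (fun _ : Fin r => A) M) :
    E →ₗ[k] MultilinearMap k (fun _ : Fin (r + 1) => A) M :=
  (MultilinearMap.curryMidLinearEquiv k (fun _ => A) M (Fin.last r)).symm.toLinearMap ∘ₗ
    μ.flip.compr₂ D

theorem backFace_apply (μ : A →ₗ[k] E →ₗ[k] E)
    (D : E →ₗ[k] MultilinearMap k (fun _ : Fin r => A) M) (x : E) (a : Fin (r + 1) → A) :
    backFace μ D x a = D (μ (a (Fin.last r)) x) fun i => a i.castSucc := by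
  simp [backFace, Fin.removeNth_last, Fin.init_def]

/-- The cochain operator dual to `x ⊗ ⋯ ⊗ a_j ⊗ a_{j+1} ⊗ ⋯ ↦ x ⊗ ⋯ ⊗ a_j a_{j+1} ⊗ ⋯`. -/
def innerFace (j : Fin r) (D : E →ₗ[k] MultilinearMap k (fun _ : Fin r => A) M) :
    E →ₗ[k] MultilinearMap k (fun _ : Fin (r + 1) => A) M :=
  (MultilinearMap.curryMidLinearEquiv k (fun _ => A) M j.castSucc).symm.toLinearMap ∘ₗ
    (MultilinearMap.compLinearMapMultilinear.toLinearMap (fun _ => LinearMap.id) j ∘ₗ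
      LinearMap.mul k A).flip ∘ₗ D

theorem innerFace_apply (j : Fin r) (D : E →ₗ[k] MultilinearMap k (fun _ : Fin r => A) M) (x : E)
    (a : Fin (r + 1) → A) :
    innerFace j D x a = D x (Fin.contractNth j.castSucc (· * ·) a) := by
  have face : innerFace j D x a = D x fun i =>
      (Function.update (fun _ : Fin r => LinearMap.id) j (LinearMap.mul k A (a j.castSucc)) :
        Fin r → A →ₗ[k] A) i (a (j.castSucc.succAbove i)) := rfl
  rw [face]
  congr 1
  ext i
  rcases lt_trichotomy i j with hij | rfl | hij
  · rw [Function.update_of_ne hij.ne, Fin.succAbove_castSucc_of_lt _ _ hij,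
      Fin.contractNth_apply_of_lt _ _ _ _ hij, LinearMap.id_apply]
  · rw [Function.update_self, Fin.succAbove_castSucc_self, Fin.contractNth_apply_of_eq _ _ _ _ rfl,
      LinearMap.mul_apply']
  · rw [Function.update_of_ne hij.ne', Fin.succAbove_castSucc_of_le _ _ hij.le,
      Fin.contractNth_apply_of_gt _ _ _ _ hij, LinearMap.id_apply]

variable (Θ : C →ₗ[k] C →ₗ[k] E →ₗ[k] E) (σ : C →ₗ[k] A →ₗ[k] A)

/-- The map `(v₀, …, v_{r+1}) ↦ D (Θ v₀ v_{r+1} x) (a₁^{v₁}, …, a_r^{v_r})`. -/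
def thetaIntegrand (D : E →ₗ[k] MultilinearMap k (fun _ : Fin r => A) M) (x : E) (a : Fin r → A) :
    MultilinearMap k (fun _ : Fin (r + 2) => C) M :=
  uncurryEnds (Θ.compr₂
    (MultilinearMap.compLinearMapₗ (fun i => σ.flip (a i)) ∘ₗ D ∘ₗ LinearMap.applyₗ x))

theorem thetaIntegrand_apply (D : E →ₗ[k] MultilinearMap k (fun _ : Fin r => A) M) (x : E)
    (a : Fin r → A) (v : Fin (r + 2) → C) :
    thetaIntegrand Θ σ D x a v =
      D (Θ (v 0) (v (Fin.last _)) x) fun i => σ (v i.succ.castSucc) (a i) :=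
  uncurryEnds_apply _ v

variable [Coalgebra k C] {Θ σ}

theorem iteratedSweedlerSum_frontFace {ρ : E →ₗ[k] A →ₗ[k] E}
    (hρ : ∀ h w x a, (sweedlerSum k h fun p q => ρ (Θ p w x) (σ q a)) = Θ h w (ρ x a))
    (D : E →ₗ[k] MultilinearMap k (fun _ : Fin r => A) M) (x : E) (a : Fin (r + 1) → A) (h : C) :
    iteratedSweedlerSum k C M (r + 2) (thetaIntegrand Θ σ (frontFace ρ D) x a) h =
      iteratedSweedlerSum k C M (r + 1)
        (thetaIntegrand Θ σ D (ρ x (a 0)) fun i => a i.succ) h := by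
  refine iteratedSweedlerSum_eq_of_splitNth _ _ 0 (fun v => ?_) h
  rw [thetaIntegrand_apply, ← hρ,
    map_sweedlerSum (f := fun y => D y fun i => σ (v i.succ.castSucc) (a i.succ))
      ⟨fun _ _ => by simp, fun _ _ => by simp⟩]
  refine congrArg (sweedlerSum k _) (funext₂ fun p q => ?_)
  have h_first : splitNth 0 p q v 0 = p := splitNth_apply_castSucc_self 0 p q v
  have h_second : splitNth 0 p q v (0 : Fin (r + 1)).succ.castSucc = q :=
    splitNth_apply_succ_self 0 p q v
  have h_last : splitNth 0 p q v (Fin.last (r + 2)) = v (Fin.last (r + 1)) :=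
    splitNth_apply_succ_of_gt (Fin.last_pos) p q v
  have h_rest (i : Fin r) : splitNth 0 p q v i.succ.succ.castSucc = v i.succ.castSucc :=
    splitNth_apply_succ_of_gt (i := i.castSucc.succ) (Fin.succ_pos _) p q v
  simp only [thetaIntegrand_apply, frontFace_apply, h_first, h_second, h_last, h_rest]

theorem iteratedSweedlerSum_backFace {μ : A →ₗ[k] E →ₗ[k] E}
    (hμ : ∀ h u a x, (sweedlerSum k h fun p q => μ (σ p a) (Θ u q x)) = Θ u h (μ a x))
    (D : E →ₗ[k] MultilinearMap k (fun _ : Fin r => A) M) (x : E) (a : Fin (r + 1) → A) (h : C) :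
    iteratedSweedlerSum k C M (r + 2) (thetaIntegrand Θ σ (backFace μ D) x a) h =
      iteratedSweedlerSum k C M (r + 1)
        (thetaIntegrand Θ σ D (μ (a (Fin.last r)) x) fun i => a i.castSucc) h := by
  refine iteratedSweedlerSum_eq_of_splitNth _ _ (Fin.last _) (fun v => ?_) h
  rw [thetaIntegrand_apply, ← hμ,
    map_sweedlerSum (f := fun y => D y fun i => σ (v i.succ.castSucc) (a i.castSucc))
      ⟨fun _ _ => by simp, fun _ _ => by simp⟩]
  refine congrArg (sweedlerSum k _) (funext₂ fun p q => ?_)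
  have h_last : splitNth (Fin.last (r + 1)) p q v (Fin.last (r + 2)) = q :=
    splitNth_apply_succ_self _ p q v
  have h_second : splitNth (Fin.last (r + 1)) p q v (Fin.last r).succ.castSucc = p :=
    splitNth_apply_castSucc_self _ p q v
  have h_first : splitNth (Fin.last (r + 1)) p q v 0 = v 0 :=
    splitNth_apply_castSucc_of_lt (i := 0) Fin.last_pos p q v
  have h_rest (i : Fin r) :
      splitNth (Fin.last (r + 1)) p q v i.castSucc.succ.castSucc = v i.succ.castSucc :=
    splitNth_apply_castSucc_of_lt (i := i.succ.castSucc) (Fin.castSucc_lt_last _) p q v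
  simp only [thetaIntegrand_apply, backFace_apply, h_first, h_second, h_last, h_rest]

theorem iteratedSweedlerSum_innerFace (hσ : IsMeasuring σ) (j : Fin r)
    (D : E →ₗ[k] MultilinearMap k (fun _ : Fin r => A) M) (x : E) (a : Fin (r + 1) → A) (h : C) :
    iteratedSweedlerSum k C M (r + 2) (thetaIntegrand Θ σ (innerFace j D) x a) h =
      iteratedSweedlerSum k C M (r + 1)
        (thetaIntegrand Θ σ D x (Fin.contractNth j.castSucc (· * ·) a)) h := by
  refine iteratedSweedlerSum_eq_of_splitNth _ _ j.succ.castSucc (fun v => ?_) h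
  let c : Fin r → A := fun i => σ (v i.succ.castSucc) (Fin.contractNth j.castSucc (· * ·) a i)
  have h_split : c = Function.update c j (sweedlerSum k (v j.succ.castSucc) fun p q =>
      σ p (a j.castSucc) * σ q (a j.succ)) := by
    rw [← hσ.map_mul]
    exact (Function.update_eq_self_iff.2
      (congrArg (σ _) (Fin.contractNth_apply_of_eq _ _ _ _ rfl).symm)).symm
  have h_linear : IsLinearMap k fun b => D (Θ (v 0) (v (Fin.last _)) x) (Function.update c j b) :=
    ((D _).toLinearMap c j).isLinear
  have h_value : thetaIntegrand Θ σ D x (Fin.contractNth j.castSucc (· * ·) a) v =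
      D (Θ (v 0) (v (Fin.last _)) x) c := thetaIntegrand_apply ..
  rw [h_value, h_split, map_sweedlerSum h_linear]
  refine congrArg (sweedlerSum k _) (funext₂ fun p q => ?_)
  have h_first : splitNth j.succ.castSucc p q v 0 = v 0 :=
    splitNth_apply_castSucc_of_lt (i := 0) (Fin.succ_pos j.castSucc) p q v
  have h_last : splitNth j.succ.castSucc p q v (Fin.last (r + 2)) = v (Fin.last (r + 1)) :=
    splitNth_apply_succ_of_gt (Fin.castSucc_lt_last _) p q v
  simp only [thetaIntegrand_apply, innerFace_apply, h_first, h_last]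
  exact congrArg _ (contractNth_splitNth (σ · ·) _ _ j p q v a)

end Faces

section SwSum

variable {k H M : Type*} [CommRing k] [Ring H] [HopfAlgebra k H] [AddCommMonoid M] [Module k M]
  {n : H → ℕ} {c₁ c₂ : H → ℕ → H}

theorem IsSweedlerRep.swSum_eq (hrep : IsSweedlerRep k H n c₁ c₂) {r : ℕ}
    (F : MultilinearMap k (fun _ : Fin (r + 1) => H) M) (h : H) :
    swSum H n c₁ c₂ r h F = iteratedSweedlerSum k H M r F h := by
  induction r generalizing h with
  | zero => rfl
  | succ r ih =>
    rw [iteratedSweedlerSum_succ, ← hrep.sum_eq h fun x t =>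
      iteratedSweedlerSum k H M r (F.curryLeft x) t]
    exact Finset.sum_congr rfl fun i _ => ih (F.curryLeft (c₁ h i)) (c₂ h i)

end SwSum

section HochschildComplex

variable {k A C E : Type*} [CommRing k] [Ring A] [Algebra k A] [AddCommMonoid C] [Module k C]
  [Coalgebra k C] [AddCommMonoid E] [Module k E] {r : ℕ}

variable (k A E) in
/-- The module `E ⊗ Ā^{⊗r}` of normalized Hochschild chains, where `Ā = A / k·1_A`. -/
abbrev NormalizedChains (r : ℕ) : Type _ :=
  E ⊗[k] ⨂[k]^r (A ⧸ Submodule.span k {(1 : A)})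

variable (k A E) in
/-- The pure chain `x ⊗ ā₁ ⊗ ⋯ ⊗ ā_r`. -/
noncomputable def pureChain (r : ℕ) :
    E →ₗ[k] MultilinearMap k (fun _ : Fin r => A) (NormalizedChains k A E r) :=
  MultilinearMap.compLinearMapₗ (fun _ => (Submodule.span k {(1 : A)}).mkQ) ∘ₗ
    PiTensorProduct.lift.symm.toLinearMap ∘ₗ TensorProduct.mk k E _

theorem pureChain_apply (x : E) (a : Fin r → A) :
    pureChain k A E r x a =
      x ⊗ₜ PiTensorProduct.tprod k fun i => (Submodule.span k {(1 : A)}).mkQ (a i) := rfl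

theorem pureChain_ext {M : Type*} [AddCommMonoid M] [Module k M]
    {φ ψ : NormalizedChains k A E r →ₗ[k] M}
    (h : ∀ x a, φ (pureChain k A E r x a) = ψ (pureChain k A E r x a)) : φ = ψ := by
  refine TensorProduct.ext (LinearMap.ext fun x =>
    PiTensorProduct.ext (MultilinearMap.ext fun b => ?_))
  choose a ha using fun i => Submodule.mkQ_surjective (Submodule.span k {(1 : A)}) (b i)
  obtain rfl : (fun i => (Submodule.span k {(1 : A)}).mkQ (a i)) = b := funext ha
  exact h x a

/-- The maps `bd` satisfy the formula of the normalized Hochschild boundary for the right action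
`ρ` and the left action `μ` of `A` on `E`. No compatibility of the two actions is assumed. -/
def IsHochschildBoundary (ρ : E →ₗ[k] A →ₗ[k] E) (μ : A →ₗ[k] E →ₗ[k] E)
    (bd : ∀ r : ℕ, NormalizedChains k A E (r + 1) →ₗ[k] NormalizedChains k A E r) : Prop :=
  ∀ r x a, bd r (pureChain k A E (r + 1) x a) =
    frontFace ρ (pureChain k A E r) x a +
      (∑ j : Fin r, (-1 : k) ^ ((j : ℕ) + 1) • innerFace j (pureChain k A E r) x a) +
        (-1 : k) ^ (r + 1) • backFace μ (pureChain k A E r) x a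

theorem innerFace_pureChain (j : Fin r) (x : E) (a : Fin (r + 1) → A) :
    innerFace j (pureChain k A E r) x a = x ⊗ₜ PiTensorProduct.tprod k fun m : Fin r =>
      if (m : ℕ) < (j : ℕ) then (Submodule.span k {(1 : A)}).mkQ (a m.castSucc)
      else if (m : ℕ) = (j : ℕ) then
        (Submodule.span k {(1 : A)}).mkQ (a j.castSucc * a j.succ)
      else (Submodule.span k {(1 : A)}).mkQ (a m.succ) := by
  rw [innerFace_apply, pureChain_apply]
  congr 2
  ext m
  rcases lt_trichotomy m j with hm | rfl | hm
  · rw [Fin.contractNth_apply_of_lt _ _ _ _ hm, if_pos (Fin.lt_def.1 hm)]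
  · rw [Fin.contractNth_apply_of_eq _ _ _ _ rfl, if_neg (lt_irrefl _), if_pos rfl]
  · rw [Fin.contractNth_apply_of_gt _ _ _ _ hm, if_neg (Fin.lt_def.1 hm).not_gt,
      if_neg (Fin.lt_def.1 hm).ne']

/-- The action on `Ā = A / k·1_A` induced by a measuring. -/
noncomputable def IsMeasuring.quotientAction {σ : C →ₗ[k] A →ₗ[k] A} (hσ : IsMeasuring σ) :
    C →ₗ[k] A ⧸ Submodule.span k {(1 : A)} →ₗ[k] A ⧸ Submodule.span k {(1 : A)} :=
  Submodule.mapQLinear _ _ ∘ₗ σ.codRestrict (Submodule.compatibleMaps _ _) fun h =>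
    (Submodule.span_singleton_le_iff_mem _ _).2 <| by
      rw [Submodule.mem_comap, hσ.map_one]
      exact Submodule.smul_mem _ _ (Submodule.mem_span_singleton_self _)

theorem IsMeasuring.quotientAction_mkQ {σ : C →ₗ[k] A →ₗ[k] A} (hσ : IsMeasuring σ) (h : C)
    (a : A) : hσ.quotientAction h ((Submodule.span k {(1 : A)}).mkQ a) =
      (Submodule.span k {(1 : A)}).mkQ (σ h a) := rfl

/-- The operator `x ⊗ ā₁ ⊗ ⋯ ⊗ ā_r ↦ ∑ Θ h⁽¹⁾ h⁽ʳ⁺²⁾ x ⊗ ā₁^{h⁽²⁾} ⊗ ⋯ ⊗ ā_r^{h⁽ʳ⁺¹⁾}`. -/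
noncomputable def thetaMap (Θ : C →ₗ[k] C →ₗ[k] E →ₗ[k] E) {σ : C →ₗ[k] A →ₗ[k] A}
    (hσ : IsMeasuring σ) (r : ℕ) :
    C →ₗ[k] NormalizedChains k A E r →ₗ[k] NormalizedChains k A E r :=
  iteratedSweedlerSum k C _ (r + 1) <| uncurryEnds <| Θ.compr₂ <|
    PiTensorProduct.lift.symm.toLinearMap ∘ₗ
      LinearMap.lcomp k _ (PiTensorProduct.lift
        ((PiTensorProduct.mapMultilinear k _ _).compLinearMap fun _ => hσ.quotientAction)) ∘ₗ
        TensorProduct.mapBilinear (.id k) E _ E _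

variable {Θ : C →ₗ[k] C →ₗ[k] E →ₗ[k] E} {σ : C →ₗ[k] A →ₗ[k] A}

theorem thetaMap_pureChain (hσ : IsMeasuring σ) (h : C) (x : E) (a : Fin r → A) :
    thetaMap Θ hσ r h (pureChain k A E r x a) =
      iteratedSweedlerSum k C _ (r + 1) (thetaIntegrand Θ σ (pureChain k A E r) x a) h := by
  rw [thetaMap, ← LinearMap.applyₗ_apply_apply, map_iteratedSweedlerSum]
  congr 2
  ext v
  rw [LinearMap.compMultilinearMap_apply, uncurryEnds_apply, thetaIntegrand_apply]
  simp [pureChain_apply, ← hσ.quotientAction_mkQ]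

theorem IsHochschildBoundary.comp_thetaMap {ρ : E →ₗ[k] A →ₗ[k] E} {μ : A →ₗ[k] E →ₗ[k] E}
    {bd : ∀ r : ℕ, NormalizedChains k A E (r + 1) →ₗ[k] NormalizedChains k A E r}
    (hbd : IsHochschildBoundary ρ μ bd) (hσ : IsMeasuring σ)
    (hρ : ∀ h w x a, (sweedlerSum k h fun p q => ρ (Θ p w x) (σ q a)) = Θ h w (ρ x a))
    (hμ : ∀ h u a x, (sweedlerSum k h fun p q => μ (σ p a) (Θ u q x)) = Θ u h (μ a x))
    (r : ℕ) (h : C) : bd r ∘ₗ thetaMap Θ hσ (r + 1) h = thetaMap Θ hσ r h ∘ₗ bd r := by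
  refine pureChain_ext fun x a => ?_
  have bd_integrand : (bd r).compMultilinearMap
      (thetaIntegrand Θ σ (pureChain k A E (r + 1)) x a) =
      thetaIntegrand Θ σ (frontFace ρ (pureChain k A E r)) x a +
        (∑ j : Fin r, (-1 : k) ^ ((j : ℕ) + 1) •
          thetaIntegrand Θ σ (innerFace j (pureChain k A E r)) x a) +
          (-1 : k) ^ (r + 1) • thetaIntegrand Θ σ (backFace μ (pureChain k A E r)) x a := by
    ext v
    simp only [LinearMap.compMultilinearMap_apply, add_apply,
      sum_apply, smul_apply, thetaIntegrand_apply, hbd r]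
  simp only [LinearMap.comp_apply, thetaMap_pureChain, map_iteratedSweedlerSum, bd_integrand,
    hbd r, map_add, map_sum, map_smul, LinearMap.add_apply, LinearMap.sum_apply,
    LinearMap.smul_apply, iteratedSweedlerSum_frontFace hρ, iteratedSweedlerSum_backFace hμ,
    iteratedSweedlerSum_innerFace hσ, frontFace_apply, backFace_apply, innerFace_apply]

end HochschildComplex

variable {k A H} in
/-- The right action `x a = x (a # 1)` of `A` on the crossed product. -/
noncomputable def crossedMulRight (σ : H →ₗ[k] A →ₗ[k] A) (f : H →ₗ[k] H →ₗ[k] A) :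
    A ⊗[k] H →ₗ[k] A →ₗ[k] A ⊗[k] H :=
  (crossedMul k A H σ f).compl₂ ((TensorProduct.mk k A H).flip 1)

variable {k A H} in
/-- The left action `a x = (a # 1) x` of `A` on the crossed product. -/
noncomputable def crossedMulLeft (σ : H →ₗ[k] A →ₗ[k] A) (f : H →ₗ[k] H →ₗ[k] A) :
    A →ₗ[k] A ⊗[k] H →ₗ[k] A ⊗[k] H :=
  crossedMul k A H σ f ∘ₗ (TensorProduct.mk k A H).flip 1

variable {k A H} in
theorem theta_chain_map_general
    (σ : H →ₗ[k] A →ₗ[k] A) (f finv : H →ₗ[k] H →ₗ[k] A)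
    (n : H → ℕ) (c₁ c₂ : H → ℕ → H)
    (hrep : IsSweedlerRep k H n c₁ c₂)
    (hweak : IsWeakAction k A H n c₁ c₂ σ)
    (hnormal : IsNormal k A H f)
    (htwisted : IsTwistedModule k A H n c₁ c₂ σ f)
    (hinv : IsConvInverse k A H n c₁ c₂ f finv)
    (bd : ∀ r : ℕ, HochM k A H (r + 1) →ₗ[k] HochM k A H r)
    (hbd : IsHochschildBoundary (crossedMulRight σ f) (crossedMulLeft σ f) bd) (h : H) :
    ∃ theta : ∀ r : ℕ, HochM k A H r →ₗ[k] HochM k A H r,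
      (∀ r x a, theta r (pureChain k A (A ⊗[k] H) r x a) =
        swSum H n c₁ c₂ (r + 1) h fun v =>
          pureChain k A (A ⊗[k] H) r (gamConj σ f finv (v 0) (v (Fin.last _)) x) fun i =>
            σ (v i.succ.castSucc) (a i)) ∧
      ∀ r, bd r ∘ₗ theta (r + 1) = theta r ∘ₗ bd r := by
  have hσ := hweak.isMeasuring hrep
  have hρ (h w : H) (x : A ⊗[k] H) (a : A) :
      (sweedlerSum k h fun p q => crossedMulRight σ f (gamConj σ f finv p w x) (σ q a)) =
        gamConj σ f finv h w (crossedMulRight σ f x a) :=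
    sweedlerSum_gamConj_crossedMul hrep hσ hweak.2.2 hnormal htwisted hinv h w x a
  have hμ (h u : H) (a : A) (x : A ⊗[k] H) :
      (sweedlerSum k h fun p q => crossedMulLeft σ f (σ p a) (gamConj σ f finv u q x)) =
        gamConj σ f finv u h (crossedMulLeft σ f a x) :=
    sweedlerSum_crossedMul_gamConj hσ hweak.2.2 hnormal u h a x
  refine ⟨fun r => thetaMap (gamConj σ f finv) hσ r h, fun r x a => ?_,
    fun r => hbd.comp_thetaMap hσ hρ hμ r h⟩
  rw [thetaMap_pureChain, ← hrep.swSum_eq]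
  congr 1
  ext v
  exact thetaIntegrand_apply ..

/-- For each `h ∈ H` the formula
`ϑ^h(x ⊗ ā₁ ⊗ ⋯ ⊗ ā_r) = γ(h⁽³⁾) x γ⁻¹(h⁽¹⁾) ⊗ (a₁ ⊗ ⋯ ⊗ a_r)^{h⁽²⁾}`
defines a well-defined `k`-linear endomorphism of the Hochschild complex
`(E ⊗ Ā^{⊗*}, b)` which is a morphism of complexes: `b ∘ ϑ^h = ϑ^h ∘ b`. -/
theorem theta_chain_map
    (σ : H →ₗ[k] A →ₗ[k] A) (f finv : H →ₗ[k] H →ₗ[k] A)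
    (n : H → ℕ) (c₁ c₂ : H → ℕ → H)
    (hrep : IsSweedlerRep k H n c₁ c₂)
    (hweak : IsWeakAction k A H n c₁ c₂ σ)
    (hnormal : IsNormal k A H f)
    (hcocycle : IsCocycle k A H n c₁ c₂ σ f)
    (htwisted : IsTwistedModule k A H n c₁ c₂ σ f)
    (hinv : IsConvInverse k A H n c₁ c₂ f finv)
    -- the Hochschild boundary map of `A` with coefficients in `E`:
    (bd : ∀ r : ℕ, HochM k A H (r + 1) →ₗ[k] HochM k A H r)
    (hbd : ∀ (r : ℕ) (x : A ⊗[k] H) (a : Fin (r + 1) → A),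
      bd r (x ⊗ₜ[k]
          (PiTensorProduct.tprod k fun i : Fin (r + 1) =>
            (Submodule.span k {(1 : A)}).mkQ (a i))) =
        (crossedMul k A H σ f x ((a 0) ⊗ₜ[k] (1 : H))) ⊗ₜ[k]
            (PiTensorProduct.tprod k fun i : Fin r =>
              (Submodule.span k {(1 : A)}).mkQ (a i.succ))
          + (∑ j : Fin r, ((-1 : k) ^ ((j : ℕ) + 1)) •
              (x ⊗ₜ[k] (PiTensorProduct.tprod k fun m : Fin r =>
                if (m : ℕ) < (j : ℕ) then (Submodule.span k {(1 : A)}).mkQ (a m.castSucc)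
                else if (m : ℕ) = (j : ℕ) then
                  (Submodule.span k {(1 : A)}).mkQ (a j.castSucc * a j.succ)
                else (Submodule.span k {(1 : A)}).mkQ (a m.succ))))
          + ((-1 : k) ^ (r + 1)) •
              ((crossedMul k A H σ f ((a (Fin.last r)) ⊗ₜ[k] (1 : H)) x) ⊗ₜ[k]
                (PiTensorProduct.tprod k fun i : Fin r =>
                  (Submodule.span k {(1 : A)}).mkQ (a i.castSucc)))) :
    ∀ h : H, ∃ theta : ∀ r : ℕ, HochM k A H r →ₗ[k] HochM k A H r,
      (∀ (r : ℕ) (x : A ⊗[k] H) (a : Fin r → A),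
        theta r (x ⊗ₜ[k]
            (PiTensorProduct.tprod k fun i : Fin r =>
              (Submodule.span k {(1 : A)}).mkQ (a i))) =
          swSum (H := H) n c₁ c₂ (r + 1) h (fun v : Fin (r + 2) → H =>
            (crossedMul k A H σ f
                (crossedMul k A H σ f (gam k A H (v (Fin.last (r + 1)))) x)
                (gammaInv k A H finv (v 0))) ⊗ₜ[k]
              (PiTensorProduct.tprod k fun i : Fin r =>
                (Submodule.span k {(1 : A)}).mkQ (σ (v i.succ.castSucc) (a i))))) ∧
      (∀ r : ℕ, (bd r) ∘ₗ (theta (r + 1)) = (theta r) ∘ₗ (bd r)) := by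
  refine theta_chain_map_general σ f finv n c₁ c₂ hrep hweak hnormal htwisted hinv bd
    fun r x a => ?_
  simp only [innerFace_pureChain, backFace_apply]
  exact hbd r x a

end Statement12
end
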